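/- Let Ω ⊂ ℝ^d be compact and convex with non-negligible interior, and let μ, ν ∈ 𝒫(Ω) both be absolutely continuous with respect to Lebesgue measure; fix λ > 0, let φ_λ be a c_{2,λ}-concave solution of sup_{φ ∈ C(Ω)} ∫φ^{c_{2,λ}}dμ + ∫φ dν, let ρ_λ be the unique solution of the WROF problem, let T_λ be a Borel map μ-a.e. equal to I − ∇φ_λ^{c₂}, and let R_λ be a Borel map a.e. equal to I − ∇φ_λ. Then R_λ ∘ T_λ(x) = x for μ-almost every x (so write R_λ = T_λ^{-1}). Moreover, a map S₀ is an optimal transport map sending ν to μ for the Huber cost c_{2,λ} if and only if S₀ = T_λ^{-1} ∘ S_λ for some optimal transport map S_λ for W₁(ν, ρ_λ). -/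

import Mathlib

/-!
The Huber cost is the infimal convolution of `c₂` and `λ|·|`, so Huber transport from `μ` to `ν`
factors through an intermediate measure `ρ`: a quadratic transport `μ → ρ` followed by a `W₁`
transport `ρ → ν`. All optimality statements are read off from the single potential `φ = φ_λ`.

*Identification of `ρ_λ`.* A Huber-concave function is `λ`-Lipschitz, and on `λ`-Lipschitz functions
the Huber and quadratic transforms agree (`ctrans_huber_eq`), so `φ` maximises
`∫ φ^{c₂} dμ + ∫ φ dν` among `λ`-Lipschitz functions. Almost everywhere `T x` is the unique minimiser
of `c₂(x, ·) - φ` (`ae_isArg`). The first variation (`first_variation`) then says that `φ` is a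
Kantorovich–Rubinstein potential between `T_# μ` and `ν` (`kr_potential`), and attained duality
(`kantorovich`, `exists_W1_plan`) supplies a plan on which it is saturated. Comparing primal and dual
values of the WROF problem and using the first variation once more gives `ρ_λ = T_# μ`
(`wrof_min_eq`).

*Absolute continuity of `ρ_λ`* (`map_absolutelyContinuous`). Mass of `ρ_λ` that the `W₁` plan leaves
in place is dominated by `ν ≪ volume`. Mass that moves sits at points `z = T x` from which `φ` grows
with the maximal slope `λ` along a segment. There `φ` is touched from above by a paraboloid and from
below by a cone, so `∇φ` is Lipschitz on the set of such `z` (quantitatively in the length of the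
segment and the depth of `z`), and `x = z - ∇φ(z)` is a locally Lipschitz function of `z`
(`RayRel.lip`). Lipschitz images of null sets are null, so `T` maps almost no `x` to a null set of
such `z`.

*Inverse map* (`ae_left_inverse`). Hence `φ` is differentiable at `T x` for `μ`-a.e. `x`, where it is
touched from above by `c₂(x, ·) - φ^{c₂}(x)`; therefore `∇φ(T x) = T x - x` and `R (T x) = x`.

*Optimal maps.* If `S` is `W₁`-optimal from `ν` to `ρ_λ`, then the Huber cost of `R ∘ S` is at most
the dual value (`huber_plan_of_W1_plan`), so `R ∘ S` is optimal. Conversely, for a Huber-optimal `S₀`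
the dual constraint is saturated `ν`-a.e., which forces the intermediate point between `S₀ y` and `y`
to be `T (S₀ y)` and `φ` to have slope `λ` from it to `y` (`slope_of_huber_eq`); hence `T ∘ S₀` is
`W₁`-optimal and `S₀ = R ∘ (T ∘ S₀)`.
-/

open MeasureTheory Filter Topology

noncomputable section

abbrev Ed (d : ℕ) := EuclideanSpace ℝ (Fin d)

variable {d : ℕ}

/-- `γ` is a coupling (transport plan) between `μ` and `ν`. -/
def IsCoupling (μ ν : Measure (Ed d)) (γ : Measure (Ed d × Ed d)) : Prop :=
  γ.map Prod.fst = μ ∧ γ.map Prod.snd = ν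

/-- The optimal transport cost `𝓘_c(μ,ν)` for the pointwise cost `c`. -/
def tCost (c : Ed d → Ed d → ℝ) (μ ν : Measure (Ed d)) : ℝ :=
  sInf {r | ∃ γ : Measure (Ed d × Ed d), IsCoupling μ ν γ ∧ r = ∫ p, c p.1 p.2 ∂γ}

/-- The Wasserstein-1 distance. -/
def W1 (μ ν : Measure (Ed d)) : ℝ := tCost (fun x y => ‖x - y‖) μ ν

/-- The squared Wasserstein-2 distance `W₂²(μ,ν)`. -/
def W2sq (μ ν : Measure (Ed d)) : ℝ := tCost (fun x y => ‖x - y‖ ^ 2) μ ν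

/-- The quadratic cost `c₂(x,y) = |x-y|²/2`. -/
def c2 (x y : Ed d) : ℝ := ‖x - y‖ ^ 2 / 2

/-- The Huber cost `c_{2,λ}`. -/
def huber (lam : ℝ) (x y : Ed d) : ℝ :=
  if ‖x - y‖ ≤ lam then ‖x - y‖ ^ 2 / 2 else lam * ‖x - y‖ - lam ^ 2 / 2

/-- The `c`-transform on `Ω`: `φ^c(x) = inf_{y ∈ Ω} c(x,y) - φ(y)`. -/
def ctrans (c : Ed d → Ed d → ℝ) (Ω : Set (Ed d)) (φ : Ed d → ℝ) (x : Ed d) : ℝ :=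
  sInf ((fun y => c x y - φ y) '' Ω)

/-- A Borel probability measure concentrated on `Ω`. -/
def ProbOn (Ω : Set (Ed d)) (μ : Measure (Ed d)) : Prop :=
  IsProbabilityMeasure μ ∧ μ Ωᶜ = 0

/-- `γ` is an optimal transport plan between `μ` and `ν` for cost `c`. -/
def IsOptimalPlan (c : Ed d → Ed d → ℝ) (μ ν : Measure (Ed d))
    (γ : Measure (Ed d × Ed d)) : Prop :=
  IsCoupling μ ν γ ∧ ∀ γ' : Measure (Ed d × Ed d), IsCoupling μ ν γ' →
    ∫ p, c p.1 p.2 ∂γ ≤ ∫ p, c p.1 p.2 ∂γ'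

/-- `T` is an optimal transport map from `μ` to `ν` for cost `c`. -/
def IsOptimalMap (c : Ed d → Ed d → ℝ) (μ ν : Measure (Ed d)) (T : Ed d → Ed d) : Prop :=
  AEMeasurable T μ ∧ μ.map T = ν ∧
    ∀ γ : Measure (Ed d × Ed d), IsCoupling μ ν γ →
      ∫ x, c x (T x) ∂μ ≤ ∫ p, c p.1 p.2 ∂γ

/-- The WROF functional `(1/2) W₂²(μ,ρ) + λ W₁(ρ,ν)`. -/
def wrof (lam : ℝ) (μ ν ρ : Measure (Ed d)) : ℝ := W2sq μ ρ / 2 + lam * W1 ρ ν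

/-- `ρ ∈ B_λ(μ)`: there exists an optimal plan for the Huber cost `c_{2,λ}` from `μ` to `ρ`
supported in `{|x-y| ≤ λ}`. -/
def Bset (lam : ℝ) (μ ρ : Measure (Ed d)) : Prop :=
  ∃ γ : Measure (Ed d × Ed d), IsOptimalPlan (huber lam) μ ρ γ ∧
    γ {p : Ed d × Ed d | lam < ‖p.1 - p.2‖} = 0

/-- `φ` solves the dual problem `sup_{φ ∈ λ-Lip(Ω)} ∫ φ^{c₂} dμ + ∫ φ dν`. -/
def DualSol (Ω : Set (Ed d)) (lam : ℝ) (μ ν : Measure (Ed d)) (φ : Ed d → ℝ) : Prop :=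
  LipschitzOnWith (Real.toNNReal lam) φ Ω ∧
    ∀ ψ : Ed d → ℝ, LipschitzOnWith (Real.toNNReal lam) ψ Ω →
      (∫ x, ctrans c2 Ω ψ x ∂μ) + ∫ x, ψ x ∂ν ≤ (∫ x, ctrans c2 Ω φ x ∂μ) + ∫ x, φ x ∂ν

/-- `φ ∈ ∂((1/2)W₂²(·,μ))(ρ)`, i.e. `φ ∈ C(Ω)` with `∫φ^{c₂}dμ + ∫φ dρ = (1/2)W₂²(ρ,μ)`. -/
def InSubdiffW2 (Ω : Set (Ed d)) (μ ρ : Measure (Ed d)) (φ : Ed d → ℝ) : Prop :=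
  ContinuousOn φ Ω ∧ (∫ x, ctrans c2 Ω φ x ∂μ) + ∫ x, φ x ∂ρ = W2sq ρ μ / 2

/-- The divergence `D_λ(ν,ρ)` with reference measure `μ`. -/
def Dlam (Ω : Set (Ed d)) (lam : ℝ) (μ ν ρ : Measure (Ed d)) : EReal :=
  ((W2sq ν μ / 2 : ℝ) : EReal) - ((W2sq ρ μ / 2 : ℝ) : EReal) -
    ⨆ φ ∈ {φ : Ed d → ℝ | InSubdiffW2 Ω μ ρ φ ∧ LipschitzOnWith (Real.toNNReal lam) φ Ω},
      (((∫ x, φ x ∂ν) - ∫ x, φ x ∂ρ : ℝ) : EReal)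

/-- `φ` is `c`-concave on `Ω`: `φ = ψ^c` for some `ψ`. -/
def CConcaveOn (c : Ed d → Ed d → ℝ) (Ω : Set (Ed d)) (φ : Ed d → ℝ) : Prop :=
  ∃ ψ : Ed d → ℝ, ∀ x ∈ Ω, φ x = ctrans c Ω ψ x

/-- The (topological) support of a measure. -/
def msupport {α : Type*} [TopologicalSpace α] [MeasurableSpace α] (γ : Measure α) : Set α :=
  {p | ∀ U : Set α, IsOpen U → p ∈ U → γ U ≠ 0}

open scoped CompactlySupported

/-! ### Kantorovich duality on a compact space -/

lemma int_cont {X : Type*} [TopologicalSpace X] [CompactSpace X]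
    [MeasurableSpace X] [BorelSpace X] [SecondCountableTopology X] (α : Measure X) [IsFiniteMeasure α]
    (f : C(X, ℝ)) : Integrable f α :=
  f.continuous.integrable_of_hasCompactSupport (HasCompactSupport.of_compactSpace f)

/-- Attained Kantorovich duality on a compact space: if every admissible pair of continuous
potentials has dual value at most `B`, some coupling has cost at most `B`. The superhedging
functional `u ↦ inf {∫ f dα + ∫ g dβ | u ≤ f ⊕ g}` is sublinear on `C(X × X)`; Hahn–Banach gives a
linear functional below it that agrees with it at `-c`. That functional is positive and has the
right marginals, and the Riesz–Markov–Kakutani theorem represents it by a measure. -/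
theorem kantorovich {X : Type*} [TopologicalSpace X] [CompactSpace X] [T2Space X]
    [HasOuterApproxClosed X]
    [SecondCountableTopology X] [MeasurableSpace X] [BorelSpace X]
    (α β : Measure X) [IsProbabilityMeasure α] [IsProbabilityMeasure β]
    (c : C(X × X, ℝ)) (B : ℝ)
    (hB : ∀ f g : C(X, ℝ), (∀ x y, f x + g y ≤ c (x, y)) → ∫ x, f x ∂α + ∫ y, g y ∂β ≤ B) :
    ∃ γ : Measure (X × X), γ.map Prod.fst = α ∧ γ.map Prod.snd = β ∧ ∫ p, c p ∂γ ≤ B := by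
  let P : C(X × X, ℝ) → Set ℝ := fun u =>
    {r | ∃ f g : C(X, ℝ), (∀ x y, u (x, y) ≤ f x + g y) ∧ r = ∫ x, f x ∂α + ∫ y, g y ∂β}
  have hlow : ∀ (u : C(X × X, ℝ)) (m : ℝ), (∀ q, m ≤ u q) → ∀ r ∈ P u, m ≤ r := by
    rintro u m hm r ⟨f, g, hfg, rfl⟩
    have h1 : ∀ y, m - g y ≤ ∫ x, f x ∂α := by
      intro y
      have : ∫ x, (m - g y) ∂α ≤ ∫ x, f x ∂α :=
        integral_mono (integrable_const _) (int_cont α f)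
          (fun x => by have := hm (x, y); have := hfg x y; simp only; linarith)
      simpa using this
    have : ∫ y, (m - ∫ x, f x ∂α) ∂β ≤ ∫ y, g y ∂β :=
      integral_mono (integrable_const _) (int_cont β g)
        (fun y => by have := h1 y; simp only; linarith)
    have h2 : m - ∫ x, f x ∂α ≤ ∫ y, g y ∂β := by simpa using this
    linarith
  have hbdd : ∀ u, BddBelow (P u) := fun u =>
    ⟨-‖u‖, fun r hr => hlow u _ (fun q => (abs_le.1 (u.norm_coe_le_norm q)).1) r hr⟩
  have hne : ∀ u, (P u).Nonempty := fun u =>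
    ⟨_, ContinuousMap.const X ‖u‖, 0, fun x y => by
      simpa using (abs_le.1 (u.norm_coe_le_norm (x, y))).2, rfl⟩
  let N : C(X × X, ℝ) → ℝ := fun u => sInf (P u)
  have hNle : ∀ u (f g : C(X, ℝ)), (∀ x y, u (x, y) ≤ f x + g y) →
      N u ≤ ∫ x, f x ∂α + ∫ y, g y ∂β := fun u f g h => csInf_le (hbdd u) ⟨f, g, h, rfl⟩
  have hN0 : N 0 = 0 := by
    apply le_antisymm
    · simpa using hNle 0 0 0 (by simp)
    · exact le_csInf (hne 0) (hlow 0 0 (by simp))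
  have hNhom' : ∀ a : ℝ, 0 < a → ∀ u, N (a • u) ≤ a * N u := by
    intro a ha u
    rw [← div_le_iff₀' ha]
    refine le_csInf (hne u) ?_
    rintro r ⟨f, g, hfg, rfl⟩
    rw [div_le_iff₀' ha]
    have := hNle (a • u) (a • f) (a • g) (fun x y => by
      have := mul_le_mul_of_nonneg_left (hfg x y) ha.le
      simpa [mul_add] using this)
    simpa [integral_const_mul, mul_add] using this
  have hNhom : ∀ a : ℝ, 0 < a → ∀ u, N (a • u) = a * N u := by
    intro a ha u
    apply le_antisymm (hNhom' a ha u)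
    have := hNhom' a⁻¹ (inv_pos.2 ha) (a • u)
    rw [smul_smul, inv_mul_cancel₀ ha.ne', one_smul] at this
    rwa [← div_eq_inv_mul, le_div_iff₀' ha] at this
  have hNadd : ∀ u v, N (u + v) ≤ N u + N v := by
    intro u v
    have : ∀ r ∈ P u, ∀ s ∈ P v, N (u + v) ≤ r + s := by
      rintro r ⟨f, g, hfg, rfl⟩ s ⟨f', g', hfg', rfl⟩
      have := hNle (u + v) (f + f') (g + g') (fun x y => by
        have := hfg x y; have := hfg' x y; simp; linarith)
      simp only [ContinuousMap.add_apply] at this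
      rw [integral_add (int_cont α f) (int_cont α f'),
        integral_add (int_cont β g) (int_cont β g')] at this
      linarith
    have h1 : ∀ r ∈ P u, N (u + v) - r ≤ N v := fun r hr =>
      le_csInf (hne v) fun s hs => by linarith [this r hr s hs]
    have h2 : N (u + v) - N v ≤ N u := le_csInf (hne u) fun r hr => by linarith [h1 r hr]
    linarith
  -- extend the linear functional on the line through `-c` that agrees with `N` at `-c`
  obtain ⟨L, hLc, hLN⟩ : ∃ L : C(X × X, ℝ) →ₗ[ℝ] ℝ, N (-c) ≤ L (-c) ∧ ∀ u, L u ≤ N u := by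
    have hH : ∀ a : ℝ, a • (-c) = 0 → a • N (-c) = 0 := by
      intro a ha
      rcases smul_eq_zero.1 ha with h | h
      · rw [h, zero_smul]
      · rw [h, hN0, smul_zero]
    obtain ⟨L, h1, h2⟩ := exists_extension_of_le_sublinear
      (LinearPMap.mkSpanSingleton' (-c) (N (-c)) hH) N hNhom hNadd
      (by
        rintro ⟨x, hx⟩
        obtain ⟨t, rfl⟩ := Submodule.mem_span_singleton.1 hx
        refine (LinearPMap.mkSpanSingleton'_apply (-c) (N (-c)) hH t hx).trans_le ?_
        change t * N (-c) ≤ N (t • (-c))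
        rcases lt_trichotomy t 0 with ht | rfl | ht
        · have e1 := hNhom (-t) (by linarith) (-c)
          have e2 := hNadd (t • (-c)) ((-t) • (-c))
          rw [← add_smul, add_neg_cancel, zero_smul, hN0, e1] at e2
          linarith
        · simp [hN0]
        · rw [hNhom t ht])
    refine ⟨L, ?_, h2⟩
    exact ((h1 ⟨-c, Submodule.mem_span_singleton_self _⟩).trans
      (LinearPMap.mkSpanSingleton'_apply_self (-c) (N (-c)) hH _)).ge
  have hLpos : ∀ u : C(X × X, ℝ), (∀ q, 0 ≤ u q) → 0 ≤ L u := by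
    intro u hu
    have h1 := hLN (-u)
    have h2 := hNle (-u) 0 0 (fun x y => by simpa using hu (x, y))
    rw [map_neg] at h1
    simp at h2
    linarith
  have hLfg : ∀ f g : C(X, ℝ), ∀ u : C(X × X, ℝ), (∀ x y, u (x, y) = f x + g y) →
      L u = ∫ x, f x ∂α + ∫ y, g y ∂β := by
    intro f g u hu
    apply le_antisymm ((hLN u).trans (hNle u f g fun x y => (hu x y).le))
    have h1 := (hLN (-u)).trans (hNle (-u) (-f) (-g) fun x y => by
      have := hu x y; simp; linarith)
    rw [map_neg] at h1
    simp only [ContinuousMap.neg_apply, integral_neg] at h1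
    linarith
  let Λ : C_c(X × X, ℝ) →ₚ[ℝ] ℝ := PositiveLinearMap.mk₀
    { toFun := fun f => L f.toContinuousMap
      map_add' := fun f g => by rw [← map_add]; rfl
      map_smul' := fun a f => by rw [RingHom.id_apply, ← map_smul]; rfl }
    (fun f hf => hLpos _ hf)
  have hΛ : ∀ u : C(X × X, ℝ), ∫ q, u q ∂(RealRMK.rieszMeasure Λ) = L u := fun u =>
    RealRMK.integral_rieszMeasure Λ (CompactlySupportedContinuousMap.continuousMapEquiv u)
  have : IsFiniteMeasure (RealRMK.rieszMeasure Λ) := by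
    constructor
    exact isCompact_univ.measure_lt_top
  refine ⟨RealRMK.rieszMeasure Λ, ?_, ?_, ?_⟩
  · apply ext_of_forall_integral_eq_of_IsFiniteMeasure
    intro f
    rw [integral_map measurable_fst.aemeasurable f.continuous.aestronglyMeasurable]
    have := hΛ (f.toContinuousMap.comp ⟨Prod.fst, continuous_fst⟩)
    rw [hLfg f.toContinuousMap 0 _ (by intro x y; simp)] at this
    simpa using this
  · apply ext_of_forall_integral_eq_of_IsFiniteMeasure
    intro f
    rw [integral_map measurable_snd.aemeasurable f.continuous.aestronglyMeasurable]
    have := hΛ (f.toContinuousMap.comp ⟨Prod.snd, continuous_snd⟩)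
    rw [hLfg 0 f.toContinuousMap _ (by intro x y; simp)] at this
    simpa using this
  · rw [hΛ]
    have h1 : -B ≤ N (-c) := by
      refine le_csInf (hne _) ?_
      rintro r ⟨f, g, hfg, rfl⟩
      have := hB (-f) (-g) (fun x y => by
        have := hfg x y; simp at this ⊢; linarith)
      simp only [ContinuousMap.neg_apply, integral_neg] at this
      linarith
    rw [map_neg] at hLc
    linarith

/-! ### The Huber cost and `c`-transforms -/

/-- Together with `huber_eq_infConv`: the Huber cost is the infimal convolution of `c₂` and
`λ|·|`. -/
lemma huber_le_infConv {lam : ℝ} (hlam : 0 < lam) (x y z : Ed d) :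
    huber lam x y ≤ c2 x z + lam * ‖z - y‖ := by
  unfold huber c2
  have ht : ‖x - y‖ ≤ ‖x - z‖ + ‖z - y‖ := norm_sub_le_norm_sub_add_norm_sub x z y
  have h1 := norm_nonneg (x - y)
  have h2 := norm_nonneg (x - z)
  have h3 := norm_nonneg (z - y)
  generalize ‖x - y‖ = s at *
  generalize ‖x - z‖ = a at *
  generalize ‖z - y‖ = b at *
  split_ifs with h
  · rcases le_total s b with hb | hb
    · nlinarith
    · nlinarith [mul_nonneg h3 (sub_nonneg.2 h)]
  · nlinarith [sq_nonneg (a - lam)]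

/-- The infimal convolution is attained on the segment between the two points, hence inside any
convex set containing them. -/
lemma huber_eq_infConv {lam : ℝ} (hlam : 0 < lam) (x y : Ed d) :
    ∃ z ∈ segment ℝ x y, huber lam x y = c2 x z + lam * ‖z - y‖ := by
  unfold huber c2
  split_ifs with h
  · exact ⟨y, right_mem_segment ℝ x y, by simp⟩
  · have hs : 0 < ‖x - y‖ := hlam.trans (not_le.1 h)
    have hr : lam / ‖x - y‖ ≤ 1 := (div_le_one hs).2 (not_le.1 h).le
    have hr0 : 0 ≤ lam / ‖x - y‖ := by positivity
    refine ⟨x + (lam / ‖x - y‖) • (y - x), ?_, ?_⟩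
    · rw [segment_eq_image']
      exact ⟨_, ⟨hr0, hr⟩, rfl⟩
    · have e1 : x - (x + (lam / ‖x - y‖) • (y - x)) = (lam / ‖x - y‖) • (x - y) := by module
      have e2 : x + (lam / ‖x - y‖) • (y - x) - y = (1 - lam / ‖x - y‖) • (x - y) := by module
      rw [e1, e2, norm_smul, norm_smul, Real.norm_of_nonneg hr0,
        Real.norm_of_nonneg (sub_nonneg.2 hr), sub_mul, div_mul_cancel₀ _ hs.ne']
      ring

lemma huber_symm (lam : ℝ) (x y : Ed d) : huber lam x y = huber lam y x := by
  unfold huber; rw [norm_sub_rev]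

lemma huber_continuous {lam : ℝ} : Continuous (fun p : Ed d × Ed d => huber lam p.1 p.2) := by
  unfold huber
  refine Continuous.if_le (by fun_prop) (by fun_prop) (by fun_prop) (by fun_prop) ?_
  intro p hp
  rw [hp]; ring

lemma huber_lip {lam : ℝ} (hlam : 0 < lam) (x x' y : Ed d) :
    huber lam x y ≤ huber lam x' y + lam * ‖x - x'‖ := by
  obtain ⟨z, -, hz⟩ := huber_eq_infConv hlam y x'
  have h1 := huber_le_infConv hlam y x z
  rw [huber_symm lam x y, huber_symm lam x' y, hz]
  have h2 : ‖z - x‖ ≤ ‖z - x'‖ + ‖x - x'‖ := by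
    rw [norm_sub_rev x x']; exact norm_sub_le_norm_sub_add_norm_sub z x' x
  nlinarith

lemma lip_of_le {lam : ℝ} (hlam : 0 < lam) {Ω : Set (Ed d)} {φ : Ed d → ℝ}
    (h : ∀ x ∈ Ω, ∀ y ∈ Ω, φ x ≤ φ y + lam * ‖x - y‖) :
    LipschitzOnWith (Real.toNNReal lam) φ Ω := by
  rw [lipschitzOnWith_iff_dist_le_mul]
  intro x hx y hy
  rw [Real.dist_eq, dist_eq_norm, Real.coe_toNNReal _ hlam.le, abs_le]
  have h1 := h x hx y hy
  have h2 := h y hy x hx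
  rw [norm_sub_rev] at h2
  constructor <;> linarith

/-- A Huber transform is `λ`-Lipschitz because the cost is. No boundedness of `ψ` is needed: if the
infimum defining `ctrans` is unbounded below at one point then it is so at every point, and the
transform is the constant junk value `0`. -/
lemma lip_of_cconcave {lam : ℝ} (hlam : 0 < lam) {Ω : Set (Ed d)} {φ : Ed d → ℝ}
    (h : CConcaveOn (huber lam) Ω φ) : LipschitzOnWith (Real.toNNReal lam) φ Ω := by
  obtain ⟨ψ, hψ⟩ := h
  refine lip_of_le hlam ?_
  have key : ∀ x ∈ Ω, ∀ x' ∈ Ω, φ x ≤ φ x' + lam * ‖x - x'‖ := by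
    intro x hx x' hx'
    rw [hψ x hx, hψ x' hx']
    unfold ctrans
    by_cases hb : BddBelow ((fun y => huber lam x y - ψ y) '' Ω)
    · have : sInf ((fun y => huber lam x y - ψ y) '' Ω) - lam * ‖x - x'‖ ≤
          sInf ((fun y => huber lam x' y - ψ y) '' Ω) := by
        refine le_csInf (Set.Nonempty.image _ ⟨x, hx⟩) ?_
        rintro _ ⟨y, hy, rfl⟩
        have h1 := csInf_le hb ⟨y, hy, rfl⟩
        have h2 := huber_lip hlam x x' y
        simp only at h1 ⊢
        linarith
      linarith
    · have hb' : ¬ BddBelow ((fun y => huber lam x' y - ψ y) '' Ω) := by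
        rintro ⟨m, hm⟩
        refine hb ⟨m - lam * ‖x' - x‖, ?_⟩
        rintro _ ⟨y, hy, rfl⟩
        have h1 := hm ⟨y, hy, rfl⟩
        have h2 := huber_lip hlam x' x y
        simp only at h1 ⊢
        linarith
      rw [Real.sInf_of_not_bddBelow hb, Real.sInf_of_not_bddBelow hb']
      positivity
  exact key

lemma lip_le {lam : ℝ} (hlam : 0 < lam) {Ω : Set (Ed d)} {φ : Ed d → ℝ}
    (h : LipschitzOnWith (Real.toNNReal lam) φ Ω) {x y : Ed d} (hx : x ∈ Ω) (hy : y ∈ Ω) :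
    φ x ≤ φ y + lam * ‖x - y‖ := by
  have := h.dist_le_mul x hx y hy
  rw [Real.dist_eq, dist_eq_norm, Real.coe_toNNReal _ hlam.le] at this
  linarith [(abs_le.1 this).2]

lemma c2_continuous : Continuous (fun p : Ed d × Ed d => c2 p.1 p.2) := by
  unfold c2; fun_prop

lemma bdd_ctrans {c : Ed d → Ed d → ℝ} (hc : Continuous (fun p : Ed d × Ed d => c p.1 p.2))
    {Ω : Set (Ed d)} (hΩ : IsCompact Ω) {ψ : Ed d → ℝ} (hψ : ContinuousOn ψ Ω) (x : Ed d) :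
    ContinuousOn (fun y => c x y - ψ y) Ω ∧ BddBelow ((fun y => c x y - ψ y) '' Ω) := by
  have : ContinuousOn (fun y => c x y - ψ y) Ω :=
    (hc.comp (Continuous.prodMk_right x)).continuousOn.sub hψ
  exact ⟨this, hΩ.bddBelow_image this⟩

lemma ctrans_le {c : Ed d → Ed d → ℝ} (hc : Continuous (fun p : Ed d × Ed d => c p.1 p.2))
    {Ω : Set (Ed d)} (hΩ : IsCompact Ω) {ψ : Ed d → ℝ} (hψ : ContinuousOn ψ Ω) (x : Ed d)
    {y : Ed d} (hy : y ∈ Ω) : ctrans c Ω ψ x ≤ c x y - ψ y :=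
  csInf_le (bdd_ctrans hc hΩ hψ x).2 ⟨y, hy, rfl⟩

lemma ctrans_attained {c : Ed d → Ed d → ℝ}
    (hc : Continuous (fun p : Ed d × Ed d => c p.1 p.2))
    {Ω : Set (Ed d)} (hΩ : IsCompact Ω) (hne : Ω.Nonempty) {ψ : Ed d → ℝ}
    (hψ : ContinuousOn ψ Ω) (x : Ed d) : ∃ y ∈ Ω, ctrans c Ω ψ x = c x y - ψ y :=
  hΩ.exists_sInf_image_eq hne (bdd_ctrans hc hΩ hψ x).1

/-- For a `λ`-Lipschitz function, the transforms for the Huber and the quadratic cost agree. -/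
lemma ctrans_huber_eq {lam : ℝ} (hlam : 0 < lam) {Ω : Set (Ed d)} (hΩ : IsCompact Ω)
    (hconv : Convex ℝ Ω) {ψ : Ed d → ℝ} (hψ : LipschitzOnWith (Real.toNNReal lam) ψ Ω)
    {x : Ed d} (hx : x ∈ Ω) : ctrans (huber lam) Ω ψ x = ctrans c2 Ω ψ x := by
  apply le_antisymm
  · obtain ⟨y, hy, h⟩ := ctrans_attained c2_continuous hΩ ⟨x, hx⟩ hψ.continuousOn x
    rw [h]
    have h1 := ctrans_le (huber_continuous (lam := lam)) hΩ hψ.continuousOn x hy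
    have h2 := huber_le_infConv hlam x y y
    simp only [sub_self, norm_zero, mul_zero, add_zero] at h2
    linarith
  · obtain ⟨y, hy, h⟩ := ctrans_attained (huber_continuous (lam := lam)) hΩ ⟨x, hx⟩
      hψ.continuousOn x
    rw [h]
    obtain ⟨z, hz, e⟩ := huber_eq_infConv hlam x y
    have hzΩ : z ∈ Ω := hconv.segment_subset hx hy hz
    have h1 := ctrans_le c2_continuous hΩ hψ.continuousOn x hzΩ
    have h2 := lip_le hlam hψ hy hzΩ
    rw [norm_sub_rev] at h2
    linarith

lemma ctrans_c2_lip {Ω : Set (Ed d)} (hΩ : IsCompact Ω) {ψ : Ed d → ℝ}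
    (hψ : ContinuousOn ψ Ω) : ∃ M : ℝ, 0 < M ∧
      LipschitzOnWith (Real.toNNReal M) (ctrans c2 Ω ψ) Ω := by
  obtain ⟨R, hR⟩ := hΩ.isBounded.exists_norm_le
  have hM : 0 < 2 * max R 1 := by positivity
  refine ⟨2 * max R 1, hM, lip_of_le hM ?_⟩
  intro x hx x' hx'
  obtain ⟨y, hy, h⟩ := ctrans_attained c2_continuous hΩ ⟨x, hx⟩ hψ x'
  have h1 := ctrans_le c2_continuous hΩ hψ x hy
  rw [h]
  have b : ∀ w ∈ Ω, ‖w - y‖ ≤ 2 * max R 1 := fun w hw => by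
    have := norm_sub_le w y; have := hR w hw; have := hR y hy; have := le_max_left R 1; linarith
  have h2 : ‖x - y‖ ≤ ‖x - x'‖ + ‖x' - y‖ := norm_sub_le_norm_sub_add_norm_sub x x' y
  have h3 : c2 x y ≤ c2 x' y + 2 * max R 1 * ‖x - x'‖ := by
    unfold c2
    have := b x hx; have := b x' hx'
    have g1 := norm_nonneg (x - y)
    have g2 := norm_nonneg (x - x')
    have g3 := norm_nonneg (x' - y)
    rcases le_total ‖x - y‖ ‖x' - y‖ with g | g
    · nlinarith [mul_nonneg hM.le g2]
    · nlinarith [mul_nonneg g2 (add_nonneg g1 g3)]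
  linarith

lemma ProbOn.ae_mem {Ω : Set (Ed d)} {μ : Measure (Ed d)} (h : ProbOn Ω μ) : ∀ᵐ x ∂μ, x ∈ Ω := by
  rw [ae_iff]; exact h.2

lemma ProbOn.integrable {Ω : Set (Ed d)} (hΩ : IsCompact Ω) {μ : Measure (Ed d)} (h : ProbOn Ω μ)
    {f : Ed d → ℝ} (hf : ContinuousOn f Ω) : Integrable f μ := by
  have := h.1
  have h1 := hf.integrableOn_compact (μ := μ) hΩ
  rwa [IntegrableOn, Measure.restrict_eq_self_of_ae_mem h.ae_mem] at h1

/-- A differentiable function touched from above at `x` by the paraboloid `c₂(a, ·) - K` shares its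
gradient there. -/
lemma gradient_eq_of_touch {f : Ed d → ℝ} {x a : Ed d} (hf : DifferentiableAt ℝ f x) {K : ℝ}
    (h : ∀ᶠ w in 𝓝 x, f w ≤ c2 a w - K) (hx : f x = c2 a x - K) : gradient f x = x - a := by
  have hg : HasFDerivAt (fun w => c2 a w - K) (innerSL ℝ (x - a)) x := by
    have h1 : HasFDerivAt (fun w : Ed d => ‖w - a‖ ^ 2)
        (2 • (innerSL ℝ (x - a)).comp (ContinuousLinearMap.id ℝ (Ed d))) x :=
      ((hasFDerivAt_id x).sub_const a).norm_sq
    have h2 := (h1.const_mul (1 / 2 : ℝ)).sub_const K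
    have e1 : (fun w => c2 a w - K) = fun w => 1 / 2 * ‖w - a‖ ^ 2 - K := by
      funext w; unfold c2; rw [norm_sub_rev]; ring
    have e2 : innerSL ℝ (x - a) = (1 / 2 : ℝ) • (2 : ℕ) •
        (innerSL ℝ (x - a)).comp (ContinuousLinearMap.id ℝ (Ed d)) := by
      ext w; simp
    rw [e1, e2]
    exact h2
  have hloc : IsLocalMax (fun w => f w - (c2 a w - K)) x := by
    filter_upwards [h] with w hw
    linarith
  have := hloc.hasFDerivAt_eq_zero (hf.hasFDerivAt.sub hg)
  rw [sub_eq_zero] at this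
  unfold gradient
  rw [this]
  apply (InnerProductSpace.toDual ℝ (Ed d)).injective
  rw [LinearIsometryEquiv.apply_symm_apply]
  ext w; simp

/-- The boundary of a convex set is Lebesgue-null. -/
lemma ae_interior {Ω : Set (Ed d)} (hconv : Convex ℝ Ω) {μ : Measure (Ed d)}
    (hμ : ProbOn Ω μ) (hac : μ ≪ volume) : ∀ᵐ x ∂μ, x ∈ interior Ω := by
  have h1 : ∀ᵐ x ∂μ, x ∉ frontier Ω := by
    have : ∀ᵐ x ∂(volume : Measure (Ed d)), x ∉ frontier Ω := by
      rw [ae_iff]; simpa using hconv.addHaar_frontier volume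
    exact hac.ae_le this
  filter_upwards [h1, hμ.ae_mem] with x hx hxΩ
  by_contra hc
  exact hx ⟨subset_closure hxΩ, hc⟩

/-- Rademacher's theorem on the interior of `Ω`. -/
lemma ae_differentiable {Ω : Set (Ed d)} {M : NNReal} {f : Ed d → ℝ}
    (hf : LipschitzOnWith M f Ω) :
    ∀ᵐ x ∂(volume : Measure (Ed d)), x ∈ interior Ω → DifferentiableAt ℝ f x := by
  filter_upwards [hf.ae_differentiableWithinAt_of_mem (μ := volume)] with x hx hxi
  exact (hx (interior_subset hxi)).differentiableAt (mem_interior_iff_mem_nhds.1 hxi)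

/-! ### First variation of the dual functional and weak duality -/

/-- `z` is the unique minimiser over `Ω` of `y ↦ c₂(x,y) - φ(y)`. -/
def IsArg (Ω : Set (Ed d)) (φ : Ed d → ℝ) (x z : Ed d) : Prop :=
  z ∈ Ω ∧ ctrans c2 Ω φ x = c2 x z - φ z ∧
    ∀ y ∈ Ω, ctrans c2 Ω φ x = c2 x y - φ y → y = z

/-- The map `I - ∇φ^{c₂}` selects, almost everywhere, the unique minimiser in the definition of
`φ^{c₂}`: any minimiser `y` makes a paraboloid centred at `y` touch `φ^{c₂}` from above at `x`. -/
lemma ae_isArg {Ω : Set (Ed d)} (hΩ : IsCompact Ω) (hconv : Convex ℝ Ω) {μ : Measure (Ed d)}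
    (hμ : ProbOn Ω μ) (hac : μ ≪ volume) {φ : Ed d → ℝ} (hφ : ContinuousOn φ Ω)
    {T : Ed d → Ed d} (hT : ∀ᵐ x ∂μ, T x = x - gradient (ctrans c2 Ω φ) x) :
    ∀ᵐ x ∂μ, x ∈ interior Ω ∧ IsArg Ω φ x (T x) := by
  obtain ⟨M, -, hM⟩ := ctrans_c2_lip hΩ hφ
  filter_upwards [ae_interior hconv hμ hac, hac.ae_le (ae_differentiable hM), hT] with x hx hd hTx
  have key : ∀ y ∈ Ω, ctrans c2 Ω φ x = c2 x y - φ y → y = T x := by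
    intro y hy h
    have hc : ∀ w, c2 y w = c2 w y := fun w => by unfold c2; rw [norm_sub_rev]
    have := gradient_eq_of_touch (a := y) (K := φ y) (hd hx)
      (Eventually.of_forall fun w => by rw [hc]; exact ctrans_le c2_continuous hΩ hφ w hy)
      (by rw [hc]; exact h)
    rw [hTx, this]; abel
  obtain ⟨y, hy, h⟩ := ctrans_attained c2_continuous hΩ ⟨x, interior_subset hx⟩ hφ x
  have := key y hy h
  subst this
  exact ⟨hx, hy, h, key⟩

/-- Envelope theorem: the one-sided derivative of `t ↦ (φ + tη)^{c₂}(x)` at `0`. -/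
lemma tendsto_ctrans_div {Ω : Set (Ed d)} (hΩ : IsCompact Ω) {φ η : Ed d → ℝ}
    (hφ : ContinuousOn φ Ω) (hη : ContinuousOn η Ω) {M : ℝ} (hM : ∀ y ∈ Ω, |η y| ≤ M)
    {x z : Ed d} (hz : z ∈ Ω) :
    (∀ t > 0, |(ctrans c2 Ω (fun y => φ y + t * η y) x - ctrans c2 Ω φ x) / t| ≤ M) ∧
    (IsArg Ω φ x z → Tendsto (fun t : ℝ =>
      (ctrans c2 Ω (fun y => φ y + t * η y) x - ctrans c2 Ω φ x) / t) (𝓝[>] 0) (𝓝 (- η z))) := by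
  have hcont : ∀ t : ℝ, ContinuousOn (fun y => φ y + t * η y) Ω := fun t =>
    hφ.add (continuousOn_const.mul hη)
  choose y hyΩ hy using fun t : ℝ => ctrans_attained c2_continuous hΩ ⟨z, hz⟩ (hcont t) x
  have hup : ∀ t > 0, ∀ w ∈ Ω, ctrans c2 Ω φ x = c2 x w - φ w →
      (ctrans c2 Ω (fun y => φ y + t * η y) x - ctrans c2 Ω φ x) / t ≤ - η w := by
    intro t ht w hw h
    rw [div_le_iff₀ ht, h]
    have := ctrans_le c2_continuous hΩ (hcont t) x hw
    linarith
  have hlo : ∀ t > 0, - η (y t) ≤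
      (ctrans c2 Ω (fun y => φ y + t * η y) x - ctrans c2 Ω φ x) / t := by
    intro t ht
    rw [le_div_iff₀ ht, hy]
    have := ctrans_le c2_continuous hΩ hφ x (hyΩ t)
    linarith
  refine ⟨fun t ht => ?_, fun harg => ?_⟩
  · obtain ⟨w, hw, h⟩ := ctrans_attained c2_continuous hΩ ⟨z, hz⟩ hφ x
    have h1 := hup t ht w hw h
    have h2 := hlo t ht
    have h3 := abs_le.1 (hM w hw)
    have h4 := abs_le.1 (hM _ (hyΩ t))
    exact abs_le.2 ⟨by linarith, by linarith⟩
  ·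
    -- the minimisers `y t` eventually leave the compact set where `η` is `ε`-far from `η z`
    have hlim : Tendsto (fun t => η (y t)) (𝓝[>] 0) (𝓝 (η z)) := by
      rw [Metric.tendsto_nhds]
      intro ε hε
      let K : Set (Ed d) := Ω ∩ (fun w => |η w - η z|) ⁻¹' Set.Ici ε
      have hK : IsCompact K := hΩ.of_isClosed_subset
        (((hη.sub continuousOn_const).abs).preimage_isClosed_of_isClosed hΩ.isClosed isClosed_Ici)
        Set.inter_subset_left
      obtain hKe | hKne := K.eq_empty_or_nonempty
      · refine Eventually.of_forall fun t => ?_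
        by_contra hc
        have : y t ∈ K := ⟨hyΩ t, not_lt.1 hc⟩
        rw [hKe] at this; exact this
      · obtain ⟨w, hwK, hw⟩ := hK.exists_isMinOn hKne
          ((bdd_ctrans c2_continuous hΩ hφ x).1.mono Set.inter_subset_left)
        have hδ : 0 < (c2 x w - φ w) - ctrans c2 Ω φ x := by
          rw [sub_pos]
          refine lt_of_le_of_ne (ctrans_le c2_continuous hΩ hφ x hwK.1) fun h => ?_
          have := harg.2.2 w hwK.1 h
          have h2 : ε ≤ |η w - η z| := hwK.2
          rw [this] at h2
          simp at h2; linarith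
        have hM0 : 0 ≤ M := (abs_nonneg _).trans (hM z hz)
        have hsmall : ∀ᶠ t : ℝ in 𝓝[>] 0, t * (2 * M) < (c2 x w - φ w) - ctrans c2 Ω φ x := by
          have : Tendsto (fun t : ℝ => t * (2 * M)) (𝓝[>] 0) (𝓝 0) := by
            have : Tendsto (fun t : ℝ => t * (2 * M)) (𝓝 0) (𝓝 (0 * (2 * M))) :=
              (continuous_id.mul continuous_const).tendsto 0
            rw [zero_mul] at this
            exact this.mono_left nhdsWithin_le_nhds
          exact this.eventually_lt_const hδ
        filter_upwards [hsmall, self_mem_nhdsWithin] with t ht ht0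
        have ht0' : 0 < t := ht0
        by_contra hc
        have hyK : y t ∈ K := ⟨hyΩ t, not_lt.1 hc⟩
        have h1 : c2 x w - φ w ≤ c2 x (y t) - φ (y t) := hw hyK
        have h2 := ctrans_le c2_continuous hΩ (hcont t) x hz
        have h3 := hy t
        have h4 := harg.2.1
        have h5 := (abs_le.1 (hM z hz))
        have h6 := (abs_le.1 (hM _ (hyΩ t)))
        nlinarith
    refine tendsto_of_tendsto_of_tendsto_of_le_of_le' hlim.neg tendsto_const_nhds ?_ ?_
    · filter_upwards [self_mem_nhdsWithin] with t ht using hlo t ht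
    · filter_upwards [self_mem_nhdsWithin] with t ht using hup t ht z hz harg.2.1

/-- First-order optimality: if moving from `φ` in direction `η` does not increase the dual
functional `∫ φ^{c₂} dμ + ∫ φ dθ`, its one-sided derivative `∫ η dθ - ∫ η ∘ T dμ` is
nonpositive. -/
lemma first_variation {Ω : Set (Ed d)} (hΩ : IsCompact Ω) {μ θ : Measure (Ed d)}
    (hμ : ProbOn Ω μ) (hθ : ProbOn Ω θ) {φ η : Ed d → ℝ}
    (hφ : ContinuousOn φ Ω) (hη : ContinuousOn η Ω) {T : Ed d → Ed d}
    (hT : ∀ᵐ x ∂μ, IsArg Ω φ x (T x))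
    (hmax : ∀ t : ℝ, 0 < t → t < 1 →
      (∫ x, ctrans c2 Ω (fun y => φ y + t * η y) x ∂μ) + ∫ x, (φ x + t * η x) ∂θ ≤
        (∫ x, ctrans c2 Ω φ x ∂μ) + ∫ x, φ x ∂θ) :
    ∫ x, η x ∂θ ≤ ∫ x, η (T x) ∂μ := by
  have := hμ.1
  have := hθ.1
  obtain ⟨M, hM⟩ := hΩ.exists_bound_of_continuousOn hη
  have hcont : ∀ t : ℝ, ContinuousOn (fun y => φ y + t * η y) Ω := fun t =>
    hφ.add (continuousOn_const.mul hη)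
  have hintg : ∀ ψ : Ed d → ℝ, ContinuousOn ψ Ω → Integrable (ctrans c2 Ω ψ) μ := fun ψ hψ => by
    obtain ⟨K, -, hK⟩ := ctrans_c2_lip hΩ hψ
    exact hμ.integrable hΩ hK.continuousOn
  have hlim : Tendsto (fun t : ℝ => ∫ x,
      (ctrans c2 Ω (fun y => φ y + t * η y) x - ctrans c2 Ω φ x) / t ∂μ) (𝓝[>] 0)
      (𝓝 (∫ x, - η (T x) ∂μ)) := by
    refine tendsto_integral_filter_of_dominated_convergence (fun _ => M) ?_ ?_
      (integrable_const M) ?_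
    · exact Eventually.of_forall fun t =>
        (((hintg _ (hcont t)).sub (hintg _ hφ)).div_const t).aestronglyMeasurable
    · filter_upwards [self_mem_nhdsWithin] with t ht
      filter_upwards [hT] with x hx
      exact (tendsto_ctrans_div hΩ hφ hη hM hx.1).1 t ht
    · filter_upwards [hT] with x hx
      exact (tendsto_ctrans_div hΩ hφ hη hM hx.1).2 hx
  have hle : ∀ᶠ t : ℝ in 𝓝[>] 0, ∫ x,
      (ctrans c2 Ω (fun y => φ y + t * η y) x - ctrans c2 Ω φ x) / t ∂μ ≤ - ∫ x, η x ∂θ := by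
    filter_upwards [Ioo_mem_nhdsGT (zero_lt_one (α := ℝ))] with t ht
    have h1 := hmax t ht.1 ht.2
    rw [integral_add (hθ.integrable hΩ hφ) ((hθ.integrable hΩ hη).const_mul t),
      integral_const_mul] at h1
    rw [integral_div, integral_sub (hintg _ (hcont t)) (hintg _ hφ), div_le_iff₀ ht.1]
    linarith
  have := le_of_tendsto hlim hle
  rw [integral_neg] at this
  linarith

/-- Weak duality: a plan costs at least as much as an admissible pair of potentials. The
integrability and change-of-variables facts used on the way are part of the conclusion. -/
lemma weak_duality {Ω : Set (Ed d)} (hΩ : IsCompact Ω) {α β : Measure (Ed d)}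
    (hα : ProbOn Ω α) (hβ : ProbOn Ω β) {γ : Measure (Ed d × Ed d)} (hγ : IsCoupling α β γ)
    {c : Ed d → Ed d → ℝ} (hc : Continuous (fun p : Ed d × Ed d => c p.1 p.2))
    {f g : Ed d → ℝ} (hf : ContinuousOn f Ω) (hg : ContinuousOn g Ω)
    (h : ∀ x ∈ Ω, ∀ y ∈ Ω, f x + g y ≤ c x y) :
    IsProbabilityMeasure γ ∧ (∀ᵐ p ∂γ, p.1 ∈ Ω ∧ p.2 ∈ Ω) ∧
    Integrable (fun p : Ed d × Ed d => c p.1 p.2) γ ∧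
    Integrable (fun p : Ed d × Ed d => f p.1) γ ∧ Integrable (fun p : Ed d × Ed d => g p.2) γ ∧
    ∫ p, f p.1 ∂γ = ∫ x, f x ∂α ∧ ∫ p, g p.2 ∂γ = ∫ x, g x ∂β ∧
    ∫ x, f x ∂α + ∫ x, g x ∂β ≤ ∫ p, c p.1 p.2 ∂γ := by
  have := hα.1
  have hγp : IsProbabilityMeasure γ := by
    constructor
    have : γ.map Prod.fst Set.univ = 1 := by rw [hγ.1]; simp
    rwa [Measure.map_apply measurable_fst MeasurableSet.univ, Set.preimage_univ] at this
  have ha1 : ∀ᵐ p ∂γ, p.1 ∈ Ω :=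
    ae_of_ae_map measurable_fst.aemeasurable (by rw [hγ.1]; exact hα.ae_mem)
  have ha2 : ∀ᵐ p ∂γ, p.2 ∈ Ω :=
    ae_of_ae_map measurable_snd.aemeasurable (by rw [hγ.2]; exact hβ.ae_mem)
  have ha : ∀ᵐ p ∂γ, p.1 ∈ Ω ∧ p.2 ∈ Ω := ha1.and ha2
  have hcint : Integrable (fun p : Ed d × Ed d => c p.1 p.2) γ := by
    have h1 := hc.continuousOn.integrableOn_compact (μ := γ) (hΩ.prod hΩ)
    rwa [IntegrableOn, Measure.restrict_eq_self_of_ae_mem] at h1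
    filter_upwards [ha] with p hp using hp
  have hfα : Integrable f (γ.map Prod.fst) := by rw [hγ.1]; exact hα.integrable hΩ hf
  have hgβ : Integrable g (γ.map Prod.snd) := by rw [hγ.2]; exact hβ.integrable hΩ hg
  have hfi : Integrable (fun p : Ed d × Ed d => f p.1) γ := hfα.comp_measurable measurable_fst
  have hgi : Integrable (fun p : Ed d × Ed d => g p.2) γ := hgβ.comp_measurable measurable_snd
  have ef : ∫ p, f p.1 ∂γ = ∫ x, f x ∂α := by
    rw [← hγ.1, integral_map measurable_fst.aemeasurable hfα.aestronglyMeasurable]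
  have eg : ∫ p, g p.2 ∂γ = ∫ x, g x ∂β := by
    rw [← hγ.2, integral_map measurable_snd.aemeasurable hgβ.aestronglyMeasurable]
  refine ⟨hγp, ha, hcint, hfi, hgi, ef, eg, ?_⟩
  rw [← ef, ← eg, ← integral_add hfi hgi]
  refine integral_mono_ae (hfi.add hgi) hcint ?_
  filter_upwards [ha] with p hp using h _ hp.1 _ hp.2

/-- Attained Kantorovich–Rubinstein duality on `Ω`. -/
lemma exists_W1_plan {Ω : Set (Ed d)} (hΩ : IsCompact Ω) {α β : Measure (Ed d)}
    (hα : ProbOn Ω α) (hβ : ProbOn Ω β) {lam : ℝ} (hlam : 0 < lam) {B : ℝ}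
    (hB : ∀ ψ : Ed d → ℝ, LipschitzOnWith (Real.toNNReal lam) ψ Ω →
      ∫ x, ψ x ∂β - ∫ x, ψ x ∂α ≤ B) :
    ∃ γ, IsCoupling α β γ ∧ lam * ∫ p, ‖p.1 - p.2‖ ∂γ ≤ B := by
  have := hα.1
  have := hβ.1
  have hΩm := hΩ.isClosed.measurableSet
  have hemb : MeasurableEmbedding (Subtype.val : Ω → Ed d) := MeasurableEmbedding.subtype_coe hΩm
  have : CompactSpace Ω := isCompact_iff_compactSpace.1 hΩ
  have hmap : ∀ {θ : Measure (Ed d)}, ProbOn Ω θ →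
      (θ.comap (Subtype.val : Ω → Ed d)).map Subtype.val = θ := fun {θ} hθ => by
    rw [hemb.map_comap, Subtype.range_coe, Measure.restrict_eq_self_of_ae_mem hθ.ae_mem]
  have hprob : ∀ {θ : Measure (Ed d)}, ProbOn Ω θ →
      IsProbabilityMeasure (θ.comap (Subtype.val : Ω → Ed d)) := fun {θ} hθ => by
    have := hθ.1
    constructor
    have : (θ.comap (Subtype.val : Ω → Ed d)).map Subtype.val Set.univ = 1 := by
      rw [hmap hθ]; simp
    rwa [Measure.map_apply measurable_subtype_coe MeasurableSet.univ, Set.preimage_univ] at this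
  have := hprob hα
  have := hprob hβ
  have hintg : ∀ {θ : Measure (Ed d)}, ProbOn Ω θ → ∀ f : Ed d → ℝ,
      ∫ x : Ω, f x ∂(θ.comap (Subtype.val : Ω → Ed d)) = ∫ x, f x ∂θ := fun {θ} hθ f => by
    conv_rhs => rw [← hmap hθ]
    rw [hemb.integral_map]
  obtain ⟨γ, h1, h2, h3⟩ := kantorovich (α.comap (Subtype.val : Ω → Ed d))
    (β.comap (Subtype.val : Ω → Ed d))
    ⟨fun p : Ω × Ω => lam * ‖(p.1 : Ed d) - p.2‖, by fun_prop⟩ B (by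
      intro f g hfg
      simp only [ContinuousMap.coe_mk] at hfg
      -- replace the pair by the `λ`-Lipschitz function `y ↦ inf_x (λ|x - y| - f x)`
      have hbd : ∀ y : Ed d, BddBelow (Set.range fun x : Ω => lam * ‖(x : Ed d) - y‖ - f x) := by
        intro y
        refine ⟨-‖f‖, ?_⟩
        rintro _ ⟨x, rfl⟩
        have := (abs_le.1 (f.norm_coe_le_norm x)).2
        have : 0 ≤ lam * ‖(x : Ed d) - y‖ := by positivity
        simp only; linarith
      let ψ : Ed d → ℝ := fun y => ⨅ x : Ω, (lam * ‖(x : Ed d) - y‖ - f x)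
      have hψle : ∀ (x : Ω) y, ψ y ≤ lam * ‖(x : Ed d) - y‖ - f x := fun x y => ciInf_le (hbd y) x
      have hlip : LipschitzOnWith (Real.toNNReal lam) ψ Ω := by
        refine lip_of_le hlam fun y hy y' hy' => ?_
        have : Nonempty Ω := ⟨⟨y, hy⟩⟩
        rw [← sub_le_iff_le_add]
        refine le_ciInf fun x => ?_
        have e1 := hψle x y
        have e2 : ‖(x : Ed d) - y‖ ≤ ‖(x : Ed d) - y'‖ + ‖y - y'‖ := by
          rw [norm_sub_rev y y']; exact norm_sub_le_norm_sub_add_norm_sub _ _ _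
        nlinarith
      have hψ1 : ∀ y : Ω, g y ≤ ψ y := fun y => by
        have : Nonempty Ω := ⟨y⟩
        exact le_ciInf fun x => by have := hfg x y; linarith
      have hψ2 : ∀ x : Ω, f x ≤ - ψ x := fun x => by
        have := hψle x x; simp at this; linarith
      have hcψ : Continuous (fun y : Ω => ψ y) := hlip.continuousOn.domRestrict
      have i1 := integral_mono (int_cont (β.comap (Subtype.val : Ω → Ed d)) g)
        (int_cont (β.comap (Subtype.val : Ω → Ed d)) ⟨_, hcψ⟩) hψ1
      have i2 := integral_mono (int_cont (α.comap (Subtype.val : Ω → Ed d)) f)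
        (int_cont (α.comap (Subtype.val : Ω → Ed d)) ⟨_, hcψ⟩).neg hψ2
      simp only [ContinuousMap.coe_mk, Pi.neg_apply, integral_neg] at i1 i2
      rw [hintg hβ ψ] at i1
      rw [hintg hα ψ] at i2
      linarith [hB ψ hlip])
  have hm : Measurable (fun p : Ω × Ω => ((p.1 : Ed d), (p.2 : Ed d))) := by fun_prop
  refine ⟨γ.map (fun p : Ω × Ω => ((p.1 : Ed d), (p.2 : Ed d))), ⟨?_, ?_⟩, ?_⟩
  · rw [Measure.map_map measurable_fst hm]
    conv_rhs => rw [← hmap hα, ← h1, Measure.map_map measurable_subtype_coe measurable_fst]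
    rfl
  · rw [Measure.map_map measurable_snd hm]
    conv_rhs => rw [← hmap hβ, ← h2, Measure.map_map measurable_subtype_coe measurable_snd]
    rfl
  · rw [integral_map hm.aemeasurable (by fun_prop), ← integral_const_mul]
    exact h3

/-! ### Regularity of the potential along maximal-slope segments -/

/-- If `z` minimises `c₂(x,·) - φ` and `φ` grows with maximal slope `λ` from `z` to `y ≠ z`, then
`x`, `z`, `y` are aligned in this order and `|x - z| = λ`. -/
lemma ray_eq {lam : ℝ} (hlam : 0 < lam) {Ω : Set (Ed d)} (hΩ : IsCompact Ω)
    (hconv : Convex ℝ Ω) {φ : Ed d → ℝ} (hφ : LipschitzOnWith (Real.toNNReal lam) φ Ω)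
    {x y z : Ed d} (hx : x ∈ Ω) (hy : y ∈ Ω) (hz : z ∈ Ω)
    (hxz : ctrans c2 Ω φ x = c2 x z - φ z) (hb : 0 < ‖y - z‖)
    (hyz : φ y - φ z = lam * ‖y - z‖) :
    z - x = (lam / ‖y - z‖) • (y - z) := by
  have hmin : ∀ w ∈ Ω, ‖z - x‖ ^ 2 / 2 - φ z ≤ ‖w - x‖ ^ 2 / 2 - φ w := fun w hw => by
    have := ctrans_le c2_continuous hΩ hφ.continuousOn x hw
    rw [hxz] at this
    unfold c2 at this
    rwa [norm_sub_rev x z, norm_sub_rev x w] at this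
  have hmem : ∀ w ∈ Ω, ∀ s : ℝ, 0 ≤ s → s ≤ 1 → z + s • (w - z) ∈ Ω := fun w hw s h0 h1 =>
    hconv.segment_subset hz hw (by rw [segment_eq_image']; exact ⟨s, ⟨h0, h1⟩, rfl⟩)
  have ha : ‖z - x‖ ≤ lam := by
    by_contra hc
    push Not at hc
    have hapos : 0 < ‖z - x‖ := hlam.trans hc
    set a := ‖z - x‖ with ha_def
    have hs0 : 0 ≤ (a - lam) / a := by apply div_nonneg <;> linarith
    have hs1 : (a - lam) / a ≤ 1 := by rw [div_le_one hapos]; linarith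
    set s := (a - lam) / a with hs
    have hsa : s * a = a - lam := by rw [hs]; field_simp
    have hw := hmem x hx s hs0 hs1
    have h1 := hmin _ hw
    have h2 := lip_le hlam hφ hz hw
    have e1 : z + s • (x - z) - x = (1 - s) • (z - x) := by module
    have e2 : z - (z + s • (x - z)) = s • (z - x) := by module
    rw [e1, norm_smul, Real.norm_of_nonneg (by linarith)] at h1
    rw [e2, norm_smul, Real.norm_of_nonneg hs0] at h2
    rw [← ha_def, hsa] at h2
    rw [← ha_def] at h1
    have e3 : (1 - s) * a = lam := by rw [sub_mul, hsa]; ring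
    rw [e3] at h1
    nlinarith
  have hin : lam * ‖y - z‖ ≤ inner ℝ (z - x) (y - z) := by
    by_contra hc
    push Not at hc
    set b := ‖y - z‖ with hb_def
    set k := lam * b - inner ℝ (z - x) (y - z) with hk
    have hkpos : 0 < k := by linarith
    have hs0 : 0 < min 1 (k / b ^ 2) := by positivity
    have hs1 : min 1 (k / b ^ 2) ≤ 1 := min_le_left _ _
    have hs2 : min 1 (k / b ^ 2) * b ^ 2 ≤ k := by
      rw [← le_div_iff₀ (by positivity)]; exact min_le_right _ _
    set s := min 1 (k / b ^ 2)
    have hw := hmem y hy s hs0.le hs1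
    have h1 := hmin _ hw
    have h2 := lip_le hlam hφ hy hw
    have e1 : z + s • (y - z) - x = (z - x) + s • (y - z) := by module
    have e2 : y - (z + s • (y - z)) = (1 - s) • (y - z) := by module
    rw [e1, norm_add_sq_real, inner_smul_right, norm_smul, Real.norm_of_nonneg hs0.le,
      ← hb_def] at h1
    rw [e2, norm_smul, Real.norm_of_nonneg (by linarith), ← hb_def] at h2
    have h3 : s * k ≤ s * (s * b ^ 2 / 2) := by
      rw [hk]; nlinarith
    have h4 := le_of_mul_le_mul_left h3 hs0
    linarith
  rw [← sub_eq_zero, ← norm_eq_zero, ← sq_eq_zero_iff]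
  apply le_antisymm _ (sq_nonneg _)
  rw [norm_sub_sq_real, inner_smul_right, norm_smul, Real.norm_of_nonneg (by positivity),
    div_mul_cancel₀ _ hb.ne']
  have h1 : lam * lam ≤ lam / ‖y - z‖ * inner ℝ (z - x) (y - z) := by
    rw [div_mul_eq_mul_div, le_div_iff₀ hb]; nlinarith
  have h2 : ‖z - x‖ ^ 2 ≤ lam ^ 2 := by gcongr
  nlinarith

/-- Pairs `(x,z)`, with `z` at depth `ε` inside `Ω`, such that `z` minimises `c₂(x,·) - φ` and `φ`
has slope `λ` along a segment of length at least `ε` starting at `z`. -/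
def RayRel (Ω : Set (Ed d)) (φ : Ed d → ℝ) (lam ε : ℝ) (x z : Ed d) : Prop :=
  x ∈ Ω ∧ z ∈ Ω ∧ Metric.closedBall z ε ⊆ Ω ∧ ctrans c2 Ω φ x = c2 x z - φ z ∧
    ∃ y ∈ Ω, ε ≤ ‖y - z‖ ∧ φ y - φ z = lam * ‖y - z‖

/-- Under `RayRel` the function `φ` is touched at `z` from above by a paraboloid, and from below by a
cone with apex at distance at least `ε`; both have gradient `z - x` at `z`. -/
lemma RayRel.taylor {lam ε : ℝ} (hlam : 0 < lam) (hε : 0 < ε) {Ω : Set (Ed d)} (hΩ : IsCompact Ω)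
    (hconv : Convex ℝ Ω) {φ : Ed d → ℝ} (hφ : LipschitzOnWith (Real.toNNReal lam) φ Ω)
    {x z : Ed d} (h : RayRel Ω φ lam ε x z) :
    ‖z - x‖ = lam ∧ ∀ w ∈ Ω,
      |φ w - φ z - inner ℝ (z - x) (w - z)| ≤ (1 / 2 + lam / (2 * ε)) * ‖w - z‖ ^ 2 := by
  obtain ⟨hx, hz, -, hxz, y, hy, hyε, hyz⟩ := h
  have hb : 0 < ‖y - z‖ := hε.trans_le hyε
  have hray := ray_eq hlam hΩ hconv hφ hx hy hz hxz hb hyz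
  refine ⟨by rw [hray, norm_smul, Real.norm_of_nonneg (by positivity), div_mul_cancel₀ _ hb.ne'],
    fun w hw => ?_⟩
  have hC1 : 0 ≤ lam / (2 * ε) * ‖w - z‖ ^ 2 := by positivity
  have hC2 : 0 ≤ 1 / 2 * ‖w - z‖ ^ 2 := by positivity
  rw [abs_le, add_mul]
  constructor
  · have h1 := lip_le hlam hφ hy hw
    rw [hray, real_inner_smul_left]
    have e : ‖y - w‖ ^ 2 = ‖y - z‖ ^ 2 - 2 * inner ℝ (y - z) (w - z) + ‖w - z‖ ^ 2 := by
      rw [← norm_sub_sq_real]; congr 2; abel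
    have h2 : ‖y - w‖ ≤ ‖y - z‖ - inner ℝ (y - z) (w - z) / ‖y - z‖ +
        ‖w - z‖ ^ 2 / (2 * ‖y - z‖) := by
      have h3 : ‖y - w‖ ≤ (‖y - w‖ ^ 2 + ‖y - z‖ ^ 2) / (2 * ‖y - z‖) := by
        rw [le_div_iff₀ (by positivity)]; nlinarith [sq_nonneg (‖y - w‖ - ‖y - z‖)]
      rw [e] at h3
      convert h3 using 1
      field_simp
      ring
    have h4 : lam * (‖w - z‖ ^ 2 / (2 * ‖y - z‖)) ≤ lam / (2 * ε) * ‖w - z‖ ^ 2 := by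
      rw [← mul_div_assoc, div_mul_eq_mul_div]
      gcongr
    have h5 := mul_le_mul_of_nonneg_left h2 hlam.le
    have h6 : lam / ‖y - z‖ * inner ℝ (y - z) (w - z) =
      lam * (inner ℝ (y - z) (w - z) / ‖y - z‖) := by ring
    rw [h6]
    nlinarith
  · have h1 := ctrans_le c2_continuous hΩ hφ.continuousOn x hw
    rw [hxz] at h1
    unfold c2 at h1
    rw [norm_sub_rev x z, norm_sub_rev x w] at h1
    have e : ‖w - x‖ ^ 2 = ‖z - x‖ ^ 2 + 2 * inner ℝ (z - x) (w - z) + ‖w - z‖ ^ 2 := by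
      rw [← norm_add_sq_real]; congr 2; abel
    rw [e] at h1
    linarith

/-- The inverse of the relation is a Lipschitz function of `z`: `x = z - ∇φ(z)`, and by
`RayRel.taylor` the gradient of `φ` is Lipschitz on the set of admissible `z`. -/
lemma RayRel.lip {lam ε : ℝ} (hlam : 0 < lam) (hε : 0 < ε) {Ω : Set (Ed d)} (hΩ : IsCompact Ω)
    (hconv : Convex ℝ Ω) {φ : Ed d → ℝ} (hφ : LipschitzOnWith (Real.toNNReal lam) φ Ω)
    {x₁ z₁ x₂ z₂ : Ed d} (h₁ : RayRel Ω φ lam ε x₁ z₁) (h₂ : RayRel Ω φ lam ε x₂ z₂) :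
    ‖x₁ - x₂‖ ≤ (1 + 6 * (1 / 2 + lam / (2 * ε)) + 2 * lam / ε) * ‖z₁ - z₂‖ := by
  obtain ⟨n₁, t₁⟩ := h₁.taylor hlam hε hΩ hconv hφ
  obtain ⟨n₂, t₂⟩ := h₂.taylor hlam hε hΩ hconv hφ
  have hC : 0 < 1 / 2 + lam / (2 * ε) := by positivity
  set C := 1 / 2 + lam / (2 * ε)
  have hr0 := norm_nonneg (z₁ - z₂)
  have hx : ‖x₁ - x₂‖ ≤ ‖z₁ - z₂‖ + ‖(z₂ - x₂) - (z₁ - x₁)‖ := by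
    have : x₁ - x₂ = (z₁ - z₂) + ((z₂ - x₂) - (z₁ - x₁)) := by abel
    rw [this]; exact norm_add_le _ _
  have key : ‖(z₂ - x₂) - (z₁ - x₁)‖ ≤ (6 * C + 2 * lam / ε) * ‖z₁ - z₂‖ := by
    rcases le_or_gt ‖z₁ - z₂‖ ε with hr | hr
    · set q := (z₂ - x₂) - (z₁ - x₁) with hq
      have hp : 0 ≤ 2 * lam / ε * ‖z₁ - z₂‖ := by positivity
      rcases eq_or_ne q 0 with hq0 | hq0
      · rw [hq0, norm_zero]; positivity
      have hqn : 0 < ‖q‖ := norm_pos_iff.2 hq0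
      -- compare both expansions at the point at distance `s` from `z₂` in direction `q`
      have hgen : ∀ s : ℝ, 0 < s → s ≤ ε →
          s * ‖q‖ ≤ C * (s ^ 2 + ‖z₁ - z₂‖ ^ 2 + (‖z₁ - z₂‖ + s) ^ 2) := by
        intro s hs hsε
        set v := (s / ‖q‖) • q with hv
        have hvn : ‖v‖ = s := by
          rw [hv, norm_smul, Real.norm_of_nonneg (by positivity), div_mul_cancel₀ _ hqn.ne']
        have hw : z₂ + v ∈ Ω := h₂.2.2.1 (by simp [hvn, hsε])
        have a1 := (abs_le.1 (t₁ _ hw)).2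
        have a2 := (abs_le.1 (t₂ _ hw)).1
        have a3 := (abs_le.1 (t₁ _ h₂.2.1)).1
        have e1 : z₂ + v - z₂ = v := by abel
        have e2 : z₂ + v - z₁ = (z₂ - z₁) + v := by abel
        rw [e1, hvn] at a2
        rw [e2, inner_add_right] at a1
        rw [norm_sub_rev z₂ z₁] at a3
        have b1 : ‖(z₂ - z₁) + v‖ ^ 2 ≤ (‖z₁ - z₂‖ + s) ^ 2 := by
          gcongr
          refine (norm_add_le _ _).trans ?_
          rw [norm_sub_rev, hvn]
        have b2 : inner ℝ q v = s * ‖q‖ := by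
          rw [hv, inner_smul_right, real_inner_self_eq_norm_sq]; field_simp
        rw [hq, inner_sub_left, ← hq] at b2
        nlinarith
      rcases hr0.eq_or_lt with h0 | h0
      · exfalso
        -- the two points coincide: small `s` contradicts `q ≠ 0`
        have hs0 : 0 < min ε (‖q‖ / (4 * C)) := by positivity
        have h1 := hgen _ hs0 (min_le_left _ _)
        have h2 : min ε (‖q‖ / (4 * C)) * (4 * C) ≤ ‖q‖ := by
          rw [← le_div_iff₀ (by positivity)]; exact min_le_right _ _
        rw [← h0] at h1
        nlinarith [mul_pos hs0 hqn]
      · have b3 : ‖z₁ - z₂‖ * ‖q‖ ≤ ‖z₁ - z₂‖ * (6 * C * ‖z₁ - z₂‖) := by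
          have := hgen _ h0 hr
          nlinarith
        have := le_of_mul_le_mul_left b3 h0
        linarith
    · have h1 : ‖(z₂ - x₂) - (z₁ - x₁)‖ ≤ 2 * lam := by
        refine (norm_sub_le _ _).trans ?_; rw [n₁, n₂]; linarith
      have h2 : 2 * lam ≤ 2 * lam / ε * ‖z₁ - z₂‖ := by
        rw [div_mul_eq_mul_div, le_div_iff₀ hε]; nlinarith
      have : 0 ≤ 6 * C * ‖z₁ - z₂‖ := by positivity
      linarith
  linarith

/-! ### Absolute continuity of the intermediate measure -/

/-- The points related to a Lebesgue-null set form a Lebesgue-null set, being contained in the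
image of the null set under a Lipschitz map. -/
lemma RayRel.null {lam ε : ℝ} (hlam : 0 < lam) (hε : 0 < ε) {Ω : Set (Ed d)} (hΩ : IsCompact Ω)
    (hconv : Convex ℝ Ω) {φ : Ed d → ℝ} (hφ : LipschitzOnWith (Real.toNNReal lam) φ Ω)
    {N : Set (Ed d)} (hN : volume N = 0) :
    volume {x | ∃ z ∈ N, RayRel Ω φ lam ε x z} = 0 := by
  classical
  set K : ℝ := 1 + 6 * (1 / 2 + lam / (2 * ε)) + 2 * lam / ε with hK
  have hK0 : 0 ≤ K := by positivity
  let Z : Set (Ed d) := {z | z ∈ N ∧ ∃ x, RayRel Ω φ lam ε x z}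
  let F : Ed d → Ed d := fun z => if h : ∃ x, RayRel Ω φ lam ε x z then h.choose else 0
  have hF : ∀ z ∈ Z, RayRel Ω φ lam ε (F z) z := by
    intro z hz
    simp only [F, dif_pos hz.2]
    exact hz.2.choose_spec
  have hlip : LipschitzOnWith (Real.toNNReal K) F Z := by
    rw [lipschitzOnWith_iff_dist_le_mul]
    intro z hz z' hz'
    rw [dist_eq_norm, dist_eq_norm, Real.coe_toNNReal _ hK0]
    exact (hF z hz).lip hlam hε hΩ hconv hφ (hF z' hz')
  have hsub : {x | ∃ z ∈ N, RayRel Ω φ lam ε x z} ⊆ F '' Z := by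
    rintro x ⟨z, hz, h⟩
    have hzZ : z ∈ Z := ⟨hz, x, h⟩
    refine ⟨z, hzZ, ?_⟩
    have := (hF z hzZ).lip hlam hε hΩ hconv hφ h
    rw [sub_self, norm_zero, mul_zero, norm_le_zero_iff, sub_eq_zero] at this
    exact this
  have hH : (Measure.hausdorffMeasure (Module.finrank ℝ (Ed d)) : Measure (Ed d)) (F '' Z) = 0 := by
    have h1 := hlip.hausdorffMeasure_image_le (d := (Module.finrank ℝ (Ed d) : ℝ)) (by positivity)
    have h2 : (Measure.hausdorffMeasure (Module.finrank ℝ (Ed d)) : Measure (Ed d)) Z = 0 :=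
      Measure.absolutelyContinuous_isAddHaarMeasure _ volume
        (measure_mono_null (fun z hz => hz.1) hN)
    rw [h2, mul_zero] at h1
    exact nonpos_iff_eq_zero.1 h1
  exact measure_mono_null hsub (Measure.absolutelyContinuous_isAddHaarMeasure _ _ hH)

lemma closedBall_subset_of_segment {Ω : Set (Ed d)} (hconv : Convex ℝ Ω) {x y z : Ed d} {r : ℝ}
    (hx : Metric.closedBall x r ⊆ Ω) (hy : Metric.closedBall y r ⊆ Ω) (hz : z ∈ segment ℝ x y) :
    Metric.closedBall z r ⊆ Ω := by
  intro w hw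
  obtain ⟨a, b, ha, hb, hab, rfl⟩ := hz
  set v := w - (a • x + b • y) with hv
  have hvr : ‖v‖ ≤ r := by rw [hv, ← dist_eq_norm]; exact hw
  have e : w = a • (x + v) + b • (y + v) := by
    have : w = (a • x + b • y) + (a + b) • v := by rw [hab, one_smul, hv]; abel
    rw [this]; module
  rw [e]
  exact hconv (hx (by simpa using hvr)) (hy (by simpa using hvr)) ha hb hab

/-- The starting points of segments in `Ω` of slope `λ` that have length at least `r` and end at
depth `r` form a compact set; this is used only to get measurability. -/
lemma isCompact_rayStart {lam r : ℝ} {Ω : Set (Ed d)} (hΩ : IsCompact Ω) {φ : Ed d → ℝ}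
    (hφ : ContinuousOn φ Ω) :
    IsCompact {z | z ∈ Ω ∧ ∃ y ∈ Ω, Metric.closedBall y r ⊆ Ω ∧ r ≤ ‖y - z‖ ∧
      φ y - φ z = lam * ‖y - z‖} := by
  have hcl : IsClosed {y : Ed d | Metric.closedBall y r ⊆ Ω} := by
    have : {y : Ed d | Metric.closedBall y r ⊆ Ω} =
        ⋂ v ∈ Metric.closedBall (0 : Ed d) r, (fun y => y + v) ⁻¹' Ω := by
      ext y
      simp only [Set.mem_ofPred_eq, Set.mem_iInter, Set.mem_preimage]
      constructor
      · intro h v hv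
        exact h (by simpa using hv)
      · intro h w hw
        have := h (w - y) (by simpa [dist_eq_norm] using hw)
        simpa using this
    rw [this]
    exact isClosed_biInter fun v _ => hΩ.isClosed.preimage (by fun_prop)
  have hg : ContinuousOn (fun p : Ed d × Ed d => φ p.2 - φ p.1 - lam * ‖p.2 - p.1‖) (Ω ×ˢ Ω) := by
    refine ContinuousOn.sub (ContinuousOn.sub ?_ ?_) (by fun_prop)
    · exact hφ.comp continuous_snd.continuousOn fun p hp => hp.2
    · exact hφ.comp continuous_fst.continuousOn fun p hp => hp.1
  have hS : IsCompact (((Ω ×ˢ Ω) ∩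
      (fun p : Ed d × Ed d => φ p.2 - φ p.1 - lam * ‖p.2 - p.1‖) ⁻¹' {0}) ∩
      {p : Ed d × Ed d | Metric.closedBall p.2 r ⊆ Ω ∧ r ≤ ‖p.2 - p.1‖}) := by
    refine IsCompact.inter_right ?_ ?_
    · exact (hΩ.prod hΩ).of_isClosed_subset
        (hg.preimage_isClosed_of_isClosed (hΩ.prod hΩ).isClosed isClosed_singleton)
        Set.inter_subset_left
    · exact (hcl.preimage continuous_snd).inter
        (isClosed_le continuous_const (by fun_prop : Continuous fun p : Ed d × Ed d => ‖p.2 - p.1‖))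
  convert hS.image continuous_fst using 1
  ext z
  constructor
  · rintro ⟨hz, y, hy, h1, h2, h3⟩
    exact ⟨(z, y), ⟨⟨⟨hz, hy⟩, by simp [h3]⟩, h1, h2⟩, rfl⟩
  · rintro ⟨⟨z', y⟩, ⟨⟨⟨hz, hy⟩, h3⟩, h1, h2⟩, rfl⟩
    exact ⟨hz, y, hy, h1, h2, sub_eq_zero.1 (by simpa using h3)⟩

lemma exists_closedBall_subset {Ω : Set (Ed d)} {x : Ed d} (hx : x ∈ interior Ω) {δ : ℝ}
    (hδ : 0 < δ) : ∃ n : ℕ, Metric.closedBall x (1 / ((n : ℝ) + 1)) ⊆ Ω ∧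
      1 / ((n : ℝ) + 1) ≤ δ := by
  obtain ⟨ε, hε, h⟩ := Metric.nhds_basis_closedBall.mem_iff.1 (mem_interior_iff_mem_nhds.1 hx)
  obtain ⟨n, hn⟩ := exists_nat_one_div_lt (lt_min hε hδ)
  exact ⟨n, (Metric.closedBall_subset_closedBall (hn.le.trans (min_le_left _ _))).trans h,
    hn.le.trans (min_le_right _ _)⟩

/-- Along an optimal plan for `W₁`, the potential has maximal slope. -/
lemma ae_slope {Ω : Set (Ed d)} (hΩ : IsCompact Ω) {α β : Measure (Ed d)}
    (hα : ProbOn Ω α) (hβ : ProbOn Ω β) {lam : ℝ} (hlam : 0 < lam) {φ : Ed d → ℝ}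
    (hφ : LipschitzOnWith (Real.toNNReal lam) φ Ω) {γ : Measure (Ed d × Ed d)}
    (hγ : IsCoupling α β γ) (hopt : lam * ∫ p, ‖p.1 - p.2‖ ∂γ ≤ ∫ x, φ x ∂β - ∫ x, φ x ∂α) :
    ∀ᵐ p ∂γ, p.1 ∈ Ω ∧ p.2 ∈ Ω ∧ φ p.2 - φ p.1 = lam * ‖p.2 - p.1‖ := by
  have hle : ∀ x ∈ Ω, ∀ y ∈ Ω, -φ x + φ y ≤ lam * ‖x - y‖ := fun x hx y hy => by
    have := lip_le hlam hφ hy hx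
    rw [norm_sub_rev] at this; linarith
  obtain ⟨_, hae, hc, hf, hg, ef, eg, -⟩ := weak_duality hΩ hα hβ hγ
    (c := fun x y => lam * ‖x - y‖) (f := fun x => -φ x) (g := φ) (by fun_prop)
    hφ.continuousOn.neg hφ.continuousOn hle
  have hfg : Integrable (fun p : Ed d × Ed d => -φ p.1 + φ p.2) γ := hf.add hg
  have hnn : 0 ≤ᵐ[γ] fun p : Ed d × Ed d => lam * ‖p.1 - p.2‖ - (-φ p.1 + φ p.2) := by
    filter_upwards [hae] with p hp
    exact sub_nonneg.2 (hle _ hp.1 _ hp.2)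
  have hi : Integrable (fun p : Ed d × Ed d => lam * ‖p.1 - p.2‖ - (-φ p.1 + φ p.2)) γ :=
    hc.sub hfg
  have hz : ∫ p, (lam * ‖p.1 - p.2‖ - (-φ p.1 + φ p.2)) ∂γ = 0 := by
    apply le_antisymm _ (integral_nonneg_of_ae hnn)
    rw [integral_sub hc hfg, integral_add hf hg, ef, eg, integral_const_mul, integral_neg]
    linarith
  filter_upwards [hae, (integral_eq_zero_iff_of_nonneg_ae hnn hi).1 hz] with p hp h0
  refine ⟨hp.1, hp.2, ?_⟩
  simp only [Pi.zero_apply] at h0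
  rw [norm_sub_rev p.2]
  linarith

/-- The intermediate measure `ρ = T_# μ` is absolutely continuous. Given a null set `N`, the part of
`ρ` on `N` that the plan `γ` leaves in place is dominated by `ν`. The other part sits at points from
which `φ` grows with slope `λ`, and `RayRel.null` shows that `T` sends almost no `x` there. -/
lemma map_absolutelyContinuous {Ω : Set (Ed d)} (hΩ : IsCompact Ω) (hconv : Convex ℝ Ω)
    {μ ν : Measure (Ed d)} (hν : ProbOn Ω ν)
    (hμac : μ ≪ volume) (hνac : ν ≪ volume) {lam : ℝ} (hlam : 0 < lam) {φ : Ed d → ℝ}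
    (hφ : LipschitzOnWith (Real.toNNReal lam) φ Ω) {T : Ed d → Ed d} (hTm : Measurable T)
    (hT : ∀ᵐ x ∂μ, x ∈ interior Ω ∧ IsArg Ω φ x (T x)) (hρ : ProbOn Ω (μ.map T))
    {γ : Measure (Ed d × Ed d)} (hγ : IsCoupling (μ.map T) ν γ)
    (hopt : lam * ∫ p, ‖p.1 - p.2‖ ∂γ ≤ ∫ x, φ x ∂ν - ∫ x, φ x ∂(μ.map T)) :
    μ.map T ≪ volume := by
  refine Measure.AbsolutelyContinuous.mk fun N hNm hN => ?_
  let e : ℕ → ℝ := fun n => 1 / ((n : ℝ) + 1)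
  have he : ∀ n, 0 < e n := fun n => Nat.one_div_pos_of_nat
  let A : ℕ → Set (Ed d) := fun n => {z | z ∈ Ω ∧ ∃ y ∈ Ω, Metric.closedBall y (e n) ⊆ Ω ∧
    e n ≤ ‖y - z‖ ∧ φ y - φ z = lam * ‖y - z‖}
  have hA : ∀ n, MeasurableSet (A n) := fun n =>
    (isCompact_rayStart hΩ hφ.continuousOn).isClosed.measurableSet
  have hUm : MeasurableSet (⋃ n, A n) := MeasurableSet.iUnion hA
  -- mass that the plan does not move lies in `N` only on a `ν`-null set
  have h1 : (μ.map T) (N \ ⋃ n, A n) = 0 := by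
    rw [← hγ.1, Measure.map_apply measurable_fst (hNm.diff hUm)]
    have a1 : ∀ᵐ p ∂γ, p.2 ∈ interior Ω :=
      ae_of_ae_map measurable_snd.aemeasurable (by rw [hγ.2]; exact ae_interior hconv hν hνac)
    have a2 : ∀ᵐ p ∂γ, p.2 ∉ N :=
      ae_of_ae_map measurable_snd.aemeasurable (by
        rw [hγ.2]; exact measure_eq_zero_iff_ae_notMem.1 (hνac hN))
    refine measure_eq_zero_iff_ae_notMem.2 ?_
    filter_upwards [a1, a2, ae_slope hΩ hρ hν hlam hφ hγ hopt] with p hp1 hp2 hp3 hmem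
    have hne : p.2 - p.1 ≠ 0 := fun h => hp2 (by rw [sub_eq_zero.1 h]; exact hmem.1)
    obtain ⟨n, hn1, hn2⟩ := exists_closedBall_subset hp1 (norm_pos_iff.2 hne)
    exact hmem.2 (Set.mem_iUnion.2 ⟨n, hp3.1, p.2, hp3.2.1, hn1, hn2, hp3.2.2⟩)
  -- `T x ∈ A n` lies on a segment between two points inside `Ω`, so `RayRel` holds for `(x, T x)`
  have h2 : ∀ n, (μ.map T) (N ∩ A n) = 0 := by
    intro n
    rw [Measure.map_apply hTm (hNm.inter (hA n))]
    refine measure_eq_zero_iff_ae_notMem.2 ?_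
    have hnull : ∀ᵐ x ∂μ, ∀ m : ℕ, x ∉ {x | ∃ z ∈ N, RayRel Ω φ lam (min (e n) (e m)) x z} :=
      ae_all_iff.2 fun m => measure_eq_zero_iff_ae_notMem.1
        (hμac (RayRel.null hlam (lt_min (he n) (he m)) hΩ hconv hφ hN))
    filter_upwards [hT, hnull] with x hx hxn hmem
    obtain ⟨hTN, hTΩ, y, hy, hyB, hyn, hyφ⟩ := hmem
    obtain ⟨m, hm, -⟩ := exists_closedBall_subset hx.1 one_pos
    have hxΩ : x ∈ Ω := interior_subset hx.1
    have hb : 0 < ‖y - T x‖ := (he n).trans_le hyn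
    have hray := ray_eq hlam hΩ hconv hφ hxΩ hy hTΩ hx.2.2.1 hb hyφ
    have hseg : T x ∈ segment ℝ x y := by
      set k := lam / ‖y - T x‖ with hk
      have hk0 : 0 < k := by positivity
      refine ⟨1 / (1 + k), k / (1 + k), by positivity, by positivity, by field_simp, ?_⟩
      have e1 : x = T x - k • (y - T x) := by rw [← hray]; abel
      have e2 : (1 / (1 + k)) • x + (k / (1 + k)) • y =
          (1 / (1 + k)) • (T x - k • (y - T x)) + (k / (1 + k)) • y := by rw [← e1]
      rw [e2]
      have e3 : (1 / (1 + k)) • (T x - k • (y - T x)) + (k / (1 + k)) • y =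
          ((1 / (1 + k)) * (1 + k)) • T x + (k / (1 + k) - 1 / (1 + k) * k) • y := by module
      rw [e3]
      have e4 : (1 / (1 + k)) * (1 + k) = 1 := by field_simp
      have e5 : k / (1 + k) - 1 / (1 + k) * k = 0 := by ring
      rw [e4, e5, one_smul, zero_smul, add_zero]
    refine hxn m ⟨T x, hTN, hxΩ, hTΩ, ?_, hx.2.2.1, y, hy, (min_le_left _ _).trans hyn, hyφ⟩
    refine closedBall_subset_of_segment hconv ?_ ?_ hseg
    · exact (Metric.closedBall_subset_closedBall (min_le_right _ _)).trans hm
    · exact (Metric.closedBall_subset_closedBall (min_le_left _ _)).trans hyB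
  have h3 : (μ.map T) (⋃ n, N ∩ A n) = 0 := measure_iUnion_null h2
  refine measure_mono_null ?_ (measure_union_null h1 h3)
  intro z hz
  by_cases h : z ∈ ⋃ n, A n
  · right
    rw [← Set.inter_iUnion]; exact ⟨hz, h⟩
  · exact Or.inl ⟨hz, h⟩

/-! ### Couplings and transport costs -/

lemma graph_coupling {μ : Measure (Ed d)} {T : Ed d → Ed d} (hT : AEMeasurable T μ) :
    IsCoupling μ (μ.map T) (μ.map fun x => (x, T x)) := by
  have h : AEMeasurable (fun x => (x, T x)) μ := aemeasurable_id.prodMk hT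
  constructor
  · rw [AEMeasurable.map_map_of_aemeasurable measurable_fst.aemeasurable h]
    exact Measure.map_id
  · rw [AEMeasurable.map_map_of_aemeasurable measurable_snd.aemeasurable h]
    rfl

lemma integral_graph {μ : Measure (Ed d)} {T : Ed d → Ed d} (hT : AEMeasurable T μ)
    {c : Ed d → Ed d → ℝ} (hc : Continuous (fun p : Ed d × Ed d => c p.1 p.2)) :
    ∫ p, c p.1 p.2 ∂(μ.map fun x => (x, T x)) = ∫ x, c x (T x) ∂μ :=
  integral_map (aemeasurable_id.prodMk hT) hc.aestronglyMeasurable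

lemma tCost_le {c : Ed d → Ed d → ℝ} (hc : ∀ x y, 0 ≤ c x y) {α β : Measure (Ed d)}
    {γ : Measure (Ed d × Ed d)} (hγ : IsCoupling α β γ) :
    tCost c α β ≤ ∫ p, c p.1 p.2 ∂γ :=
  csInf_le ⟨0, by rintro r ⟨γ', -, rfl⟩; exact integral_nonneg fun p => hc _ _⟩ ⟨γ, hγ, rfl⟩

lemma le_tCost {c : Ed d → Ed d → ℝ} {α β : Measure (Ed d)} [IsProbabilityMeasure α]
    [IsProbabilityMeasure β] {B : ℝ}
    (h : ∀ γ, IsCoupling α β γ → B ≤ ∫ p, c p.1 p.2 ∂γ) : B ≤ tCost c α β := by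
  refine le_csInf ⟨_, α.prod β, ⟨?_, ?_⟩, rfl⟩ ?_
  · simp [Measure.map_fst_prod]
  · simp [Measure.map_snd_prod]
  · rintro r ⟨γ, hγ, rfl⟩; exact h γ hγ

lemma ProbOn.map {Ω : Set (Ed d)} (hΩ : IsCompact Ω) {μ : Measure (Ed d)} (hμ : ProbOn Ω μ)
    {T : Ed d → Ed d} (hTm : Measurable T) (hT : ∀ᵐ x ∂μ, T x ∈ Ω) : ProbOn Ω (μ.map T) := by
  have := hμ.1
  refine ⟨Measure.isProbabilityMeasure_map hTm.aemeasurable, ?_⟩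
  rw [Measure.map_apply hTm hΩ.isClosed.measurableSet.compl]
  rw [ae_iff] at hT; exact hT

/-- Pushing mass along `T` and evaluating a function continuous on `Ω`. -/
lemma integral_push {Ω : Set (Ed d)} (hΩ : IsCompact Ω) {μ : Measure (Ed d)}
    {T : Ed d → Ed d} (hTm : AEMeasurable T μ) (hρ : ProbOn Ω (μ.map T)) {f : Ed d → ℝ}
    (hf : ContinuousOn f Ω) :
    Integrable (fun x => f (T x)) μ ∧ ∫ x, f x ∂(μ.map T) = ∫ x, f (T x) ∂μ := by
  have h := hρ.integrable hΩ hf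
  exact ⟨h.comp_aemeasurable hTm, integral_map hTm h.aestronglyMeasurable⟩

lemma ctrans_c2_continuousOn {Ω : Set (Ed d)} (hΩ : IsCompact Ω) {ψ : Ed d → ℝ}
    (hψ : ContinuousOn ψ Ω) : ContinuousOn (ctrans c2 Ω ψ) Ω := by
  obtain ⟨M, -, hM⟩ := ctrans_c2_lip hΩ hψ
  exact hM.continuousOn

/-! ### The WROF minimiser and the inverse map -/

/-- A potential maximal among continuous functions for the Huber dual functional is maximal among
`λ`-Lipschitz functions for the quadratic one. -/
lemma dualSol_of_huber {Ω : Set (Ed d)} (hΩ : IsCompact Ω) (hconv : Convex ℝ Ω)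
    {μ ν : Measure (Ed d)} (hμ : ProbOn Ω μ) {lam : ℝ} (hlam : 0 < lam) {φ : Ed d → ℝ}
    (hφ : LipschitzOnWith (Real.toNNReal lam) φ Ω)
    (hmax : ∀ ψ : Ed d → ℝ, ContinuousOn ψ Ω →
      (∫ x, ctrans (huber lam) Ω ψ x ∂μ) + ∫ x, ψ x ∂ν
        ≤ (∫ x, ctrans (huber lam) Ω φ x ∂μ) + ∫ x, φ x ∂ν) : DualSol Ω lam μ ν φ := by
  have key : ∀ ψ : Ed d → ℝ, LipschitzOnWith (Real.toNNReal lam) ψ Ω →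
      ∫ x, ctrans (huber lam) Ω ψ x ∂μ = ∫ x, ctrans c2 Ω ψ x ∂μ := fun ψ hψ => by
    refine integral_congr_ae ?_
    filter_upwards [hμ.ae_mem] with x hx using ctrans_huber_eq hlam hΩ hconv hψ hx
  refine ⟨hφ, fun ψ hψ => ?_⟩
  have := hmax ψ hψ.continuousOn
  rwa [key ψ hψ, key φ hφ] at this

/-- `φ` is a Kantorovich–Rubinstein potential between `T_# μ` and `ν`. -/
lemma kr_potential {Ω : Set (Ed d)} (hΩ : IsCompact Ω)
    {μ ν : Measure (Ed d)} (hμ : ProbOn Ω μ) (hν : ProbOn Ω ν) {lam : ℝ} (hlam : 0 < lam)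
    {φ : Ed d → ℝ} (hφ : DualSol Ω lam μ ν φ) {T : Ed d → Ed d} (hTm : Measurable T)
    (hT : ∀ᵐ x ∂μ, IsArg Ω φ x (T x)) {ψ : Ed d → ℝ}
    (hψ : LipschitzOnWith (Real.toNNReal lam) ψ Ω) :
    ∫ x, ψ x ∂ν - ∫ x, ψ x ∂(μ.map T) ≤ ∫ x, φ x ∂ν - ∫ x, φ x ∂(μ.map T) := by
  have hρ : ProbOn Ω (μ.map T) := hμ.map hΩ hTm (hT.mono fun x hx => hx.1)
  have h1 := first_variation (η := fun x => ψ x - φ x) hΩ hμ hν hφ.1.continuousOn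
    (hψ.continuousOn.sub hφ.1.continuousOn) hT ?_
  · have a := integral_push hΩ hTm.aemeasurable hρ hψ.continuousOn
    have b := integral_push hΩ hTm.aemeasurable hρ hφ.1.continuousOn
    rw [a.2, b.2]
    rw [integral_sub (hν.integrable hΩ hψ.continuousOn) (hν.integrable hΩ hφ.1.continuousOn),
      integral_sub a.1 b.1] at h1
    linarith
  · intro t ht0 ht1
    refine hφ.2 _ (lip_of_le hlam fun x hx y hy => ?_)
    have a := mul_le_mul_of_nonneg_left (lip_le hlam hψ hx hy) ht0.le
    have b := mul_le_mul_of_nonneg_left (lip_le hlam hφ.1 hx hy) (sub_nonneg.2 ht1.le)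
    linarith

/-- The transport cost of `T` in terms of the potentials. -/
lemma integral_c2_map {Ω : Set (Ed d)} (hΩ : IsCompact Ω)
    {μ : Measure (Ed d)} (hμ : ProbOn Ω μ) {φ : Ed d → ℝ} (hφ : ContinuousOn φ Ω)
    {T : Ed d → Ed d} (hTm : Measurable T) (hT : ∀ᵐ x ∂μ, IsArg Ω φ x (T x)) :
    Integrable (fun x => c2 x (T x)) μ ∧
    ∫ x, c2 x (T x) ∂μ = ∫ x, ctrans c2 Ω φ x ∂μ + ∫ x, φ x ∂(μ.map T) := by
  have hρ : ProbOn Ω (μ.map T) := hμ.map hΩ hTm (hT.mono fun x hx => hx.1)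
  have a := integral_push hΩ hTm.aemeasurable hρ hφ
  have b := hμ.integrable hΩ (ctrans_c2_continuousOn hΩ hφ)
  have e : (fun x => ctrans c2 Ω φ x + φ (T x)) =ᵐ[μ] fun x => c2 x (T x) := by
    filter_upwards [hT] with x hx
    linarith [hx.2.1]
  exact ⟨(b.add a.1).congr e, by rw [a.2, ← integral_add b a.1, integral_congr_ae e]⟩

/-- The minimiser of the WROF functional is `T_# μ`: along the potential `φ` the primal and dual
values agree, so `φ` is a quadratic Kantorovich potential between `μ` and the minimiser, and the
first variation of the dual functional identifies the minimiser. -/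
lemma wrof_min_eq {Ω : Set (Ed d)} (hΩ : IsCompact Ω)
    {μ ν : Measure (Ed d)} (hμ : ProbOn Ω μ) (hν : ProbOn Ω ν) {lam : ℝ} (hlam : 0 < lam)
    {φ : Ed d → ℝ} (hφ : LipschitzOnWith (Real.toNNReal lam) φ Ω) {T : Ed d → Ed d}
    (hTm : Measurable T) (hT : ∀ᵐ x ∂μ, IsArg Ω φ x (T x))
    {γ : Measure (Ed d × Ed d)} (hγ : IsCoupling (μ.map T) ν γ)
    (hopt : lam * ∫ p, ‖p.1 - p.2‖ ∂γ ≤ ∫ x, φ x ∂ν - ∫ x, φ x ∂(μ.map T))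
    {ρ : Measure (Ed d)} (hρ : ProbOn Ω ρ)
    (hmin : ∀ ρ', ProbOn Ω ρ' → wrof lam μ ν ρ ≤ wrof lam μ ν ρ') : ρ = μ.map T := by
  have := hμ.1
  have := hν.1
  have := hρ.1
  have hφc := hφ.continuousOn
  have hρ' : ProbOn Ω (μ.map T) := hμ.map hΩ hTm (hT.mono fun x hx => hx.1)
  have := hρ'.1
  have h0 := hmin _ hρ'
  unfold wrof at h0
  have hsq : Continuous (fun p : Ed d × Ed d => ‖p.1 - p.2‖ ^ 2) := by fun_prop
  have h1 : W2sq μ (μ.map T) / 2 ≤ ∫ x, ctrans c2 Ω φ x ∂μ + ∫ x, φ x ∂(μ.map T) := by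
    rw [← (integral_c2_map hΩ hμ hφc hTm hT).2]
    have := tCost_le (c := fun x y => ‖x - y‖ ^ 2) (fun x y => by positivity)
      (graph_coupling (μ := μ) hTm.aemeasurable)
    rw [integral_graph (c := fun x y => ‖x - y‖ ^ 2) hTm.aemeasurable hsq] at this
    unfold c2 W2sq
    rw [integral_div]
    linarith
  have h2 : lam * W1 (μ.map T) ν ≤ ∫ x, φ x ∂ν - ∫ x, φ x ∂(μ.map T) :=
    (mul_le_mul_of_nonneg_left (tCost_le (c := fun x y => ‖x - y‖)
      (fun x y => norm_nonneg _) hγ) hlam.le).trans hopt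
  have h3 : ∫ x, φ x ∂ν - ∫ x, φ x ∂ρ ≤ lam * W1 ρ ν := by
    rw [← div_le_iff₀' hlam]
    refine le_tCost fun γ' hγ' => ?_
    rw [div_le_iff₀' hlam]
    have := (weak_duality hΩ hρ hν hγ' (c := fun x y => lam * ‖x - y‖) (f := fun x => -φ x)
      (g := φ) (by fun_prop) hφc.neg hφc (fun x hx y hy => by
        have := lip_le hlam hφ hy hx
        rw [norm_sub_rev] at this; linarith)).2.2.2.2.2.2.2
    rw [integral_neg, integral_const_mul] at this
    linarith
  have h4 : W2sq μ ρ / 2 ≤ ∫ x, ctrans c2 Ω φ x ∂μ + ∫ x, φ x ∂ρ := by linarith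
  have h5 : ∀ ψ : Ed d → ℝ, ContinuousOn ψ Ω →
      ∫ x, ctrans c2 Ω ψ x ∂μ + ∫ x, ψ x ∂ρ ≤ W2sq μ ρ / 2 := by
    intro ψ hψ
    rw [le_div_iff₀' two_pos]
    refine le_tCost fun γ' hγ' => ?_
    have := (weak_duality hΩ hμ hρ hγ' (c := fun x y => ‖x - y‖ ^ 2)
      (f := fun x => 2 * ctrans c2 Ω ψ x) (g := fun x => 2 * ψ x) hsq
      (continuousOn_const.mul (ctrans_c2_continuousOn hΩ hψ)) (continuousOn_const.mul hψ)
      (fun x hx y hy => by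
        have := ctrans_le c2_continuous hΩ hψ x hy
        unfold c2 at this ⊢
        linarith)).2.2.2.2.2.2.2
    rw [integral_const_mul, integral_const_mul] at this
    linarith
  have h6 : ∀ η : Ed d → ℝ, ContinuousOn η Ω → ∫ x, η x ∂ρ ≤ ∫ x, η (T x) ∂μ := fun η hη =>
    first_variation hΩ hμ hρ hφc hη hT fun t _ _ =>
      (h5 _ (hφc.add (continuousOn_const.mul hη))).trans h4
  refine ext_of_forall_integral_eq_of_IsFiniteMeasure fun f => ?_
  have hf := f.continuous.continuousOn (s := Ω)
  rw [(integral_push hΩ hTm.aemeasurable hρ' hf).2]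
  refine le_antisymm (h6 _ hf) ?_
  have := h6 (fun x => -f x) hf.neg
  rw [integral_neg, integral_neg] at this
  linarith

/-- `R ∘ T = id`: the function `φ` touches `c₂(x, ·) - φ^{c₂}(x)` from below at `T x`, and `φ` is
differentiable at `T x` for almost every `x` because `T_# μ` is absolutely continuous. -/
lemma ae_left_inverse {Ω : Set (Ed d)} (hΩ : IsCompact Ω) (hconv : Convex ℝ Ω)
    {μ : Measure (Ed d)} {lam : ℝ} {φ : Ed d → ℝ}
    (hφ : LipschitzOnWith (Real.toNNReal lam) φ Ω) {T R : Ed d → Ed d} (hTm : Measurable T)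
    (hT : ∀ᵐ x ∂μ, IsArg Ω φ x (T x)) (hρ : ProbOn Ω (μ.map T)) (hρac : μ.map T ≪ volume)
    (hR : ∀ᵐ x ∂(volume : Measure (Ed d)), R x = x - gradient φ x) :
    ∀ᵐ x ∂μ, R (T x) = x := by
  filter_upwards [hT, ae_of_ae_map hTm.aemeasurable (ae_interior hconv hρ hρac),
    ae_of_ae_map hTm.aemeasurable (hρac.ae_le (ae_differentiable hφ)),
    ae_of_ae_map hTm.aemeasurable (hρac.ae_le hR)] with x hx hi hd hRx
  have := gradient_eq_of_touch (a := x) (K := ctrans c2 Ω φ x) (hd hi)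
    (by
      filter_upwards [mem_interior_iff_mem_nhds.1 hi] with w hw
      linarith [ctrans_le c2_continuous hΩ hφ.continuousOn x hw])
    (by linarith [hx.2.1])
  rw [hRx, this]; abel

/-! ### Optimal maps for the Huber cost -/

/-- The dual constraint for the Huber cost. -/
lemma huber_dual_le {Ω : Set (Ed d)} (hΩ : IsCompact Ω) (hconv : Convex ℝ Ω) {lam : ℝ}
    (hlam : 0 < lam) {φ : Ed d → ℝ} (hφ : LipschitzOnWith (Real.toNNReal lam) φ Ω) :
    ∀ y ∈ Ω, ∀ x ∈ Ω, φ y + ctrans c2 Ω φ x ≤ huber lam y x := by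
  intro y hy x hx
  have := ctrans_le (huber_continuous (lam := lam)) hΩ hφ.continuousOn x hy
  rw [ctrans_huber_eq hlam hΩ hconv hφ hx, huber_symm] at this
  linarith

/-- When the Huber dual constraint is saturated at `(y, x)`, the point `T x` is the intermediate
point of the infimal convolution, and `φ` has maximal slope between `T x` and `y`. -/
lemma slope_of_huber_eq {Ω : Set (Ed d)} (hΩ : IsCompact Ω) (hconv : Convex ℝ Ω) {lam : ℝ}
    (hlam : 0 < lam) {φ : Ed d → ℝ} (hφ : LipschitzOnWith (Real.toNNReal lam) φ Ω)
    {x y z : Ed d} (hx : x ∈ Ω) (hy : y ∈ Ω) (hz : IsArg Ω φ x z)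
    (h : huber lam y x = φ y + ctrans c2 Ω φ x) : lam * ‖y - z‖ = φ y - φ z := by
  obtain ⟨w, hw, e⟩ := huber_eq_infConv hlam x y
  have hwΩ : w ∈ Ω := hconv.segment_subset hx hy hw
  rw [huber_symm, e] at h
  have h1 := ctrans_le c2_continuous hΩ hφ.continuousOn x hwΩ
  have h2 := lip_le hlam hφ hy hwΩ
  rw [norm_sub_rev] at h2
  have h3 : w = z := hz.2.2 w hwΩ (by linarith)
  subst h3
  rw [norm_sub_rev]
  linarith

/-- A plan `π` between `ν` and `ρ = T_# μ` that is optimal for `W₁` yields, on replacing the second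
coordinate `z` by `R z`, a plan between `ν` and `μ` whose Huber cost is at most the dual value. -/
lemma huber_plan_of_W1_plan {Ω : Set (Ed d)} (hΩ : IsCompact Ω) (hconv : Convex ℝ Ω)
    {μ ν : Measure (Ed d)} (hμ : ProbOn Ω μ) (hν : ProbOn Ω ν) {lam : ℝ} (hlam : 0 < lam)
    {φ : Ed d → ℝ} (hφ : LipschitzOnWith (Real.toNNReal lam) φ Ω) {T R : Ed d → Ed d}
    (hTm : Measurable T) (hRm : Measurable R) (hT : ∀ᵐ x ∂μ, IsArg Ω φ x (T x))
    (hRT : ∀ᵐ x ∂μ, R (T x) = x) (hRρ : (μ.map T).map R = μ)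
    {π : Measure (Ed d × Ed d)} (hπ : IsCoupling ν (μ.map T) π)
    (hπc : lam * ∫ p, ‖p.1 - p.2‖ ∂π ≤ ∫ x, φ x ∂ν - ∫ x, φ x ∂(μ.map T)) :
    IsCoupling ν μ (π.map fun p => (p.1, R p.2)) ∧
      ∫ p, huber lam p.1 p.2 ∂(π.map fun p => (p.1, R p.2)) ≤
        ∫ x, φ x ∂ν + ∫ x, ctrans c2 Ω φ x ∂μ := by
  have hφc := hφ.continuousOn
  have hc := ctrans_c2_continuousOn hΩ hφc
  have hρ : ProbOn Ω (μ.map T) := hμ.map hΩ hTm (hT.mono fun x hx => hx.1)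
  have hm : Measurable fun p : Ed d × Ed d => (p.1, R p.2) := by fun_prop
  have hcpl : IsCoupling ν μ (π.map fun p => (p.1, R p.2)) := by
    constructor
    · rw [Measure.map_map measurable_fst hm]; exact hπ.1
    · rw [Measure.map_map measurable_snd hm, ← hRρ, ← hπ.2, Measure.map_map hRm measurable_snd]
      rfl
  refine ⟨hcpl, ?_⟩
  have hI := (weak_duality hΩ hν hμ hcpl (huber_continuous (lam := lam)) hφc hc
    (huber_dual_le hΩ hconv hlam hφ)).2.2.1
  have hN : Integrable (fun p : Ed d × Ed d => ‖p.1 - p.2‖) π :=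
    (weak_duality hΩ hν hρ hπ (c := fun x y => ‖x - y‖) (f := fun _ => 0) (g := fun _ => 0)
    (by fun_prop) continuousOn_const continuousOn_const (fun x _ y _ => by simp)).2.2.1
  rw [integral_map hm.aemeasurable huber_continuous.aestronglyMeasurable]
  have hI' : Integrable (fun p : Ed d × Ed d => huber lam p.1 (R p.2)) π :=
    (integrable_map_measure huber_continuous.aestronglyMeasurable hm.aemeasurable).1 hI
  have hQ := integral_c2_map hΩ hμ hφc hTm hT
  have hcm : Measurable fun z => c2 (R z) z := by
    unfold c2
    fun_prop
  have hcongr : (fun x => c2 x (T x)) =ᵐ[μ] fun x => c2 (R (T x)) (T x) := by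
    filter_upwards [hRT] with x hx
    rw [hx]
  have hQ1 : Integrable (fun z => c2 (R z) z) (μ.map T) :=
    (integrable_map_measure hcm.aestronglyMeasurable hTm.aemeasurable).2 (hQ.1.congr hcongr)
  have hQ2 : ∫ z, c2 (R z) z ∂(μ.map T) =
      ∫ x, ctrans c2 Ω φ x ∂μ + ∫ x, φ x ∂(μ.map T) := by
    rw [integral_map hTm.aemeasurable hcm.aestronglyMeasurable, ← integral_congr_ae hcongr, hQ.2]
  have hQ3 : Integrable (fun p : Ed d × Ed d => c2 (R p.2) p.2) π := by
    rw [← hπ.2] at hQ1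
    exact hQ1.comp_measurable measurable_snd
  have hQ4 : ∫ p, c2 (R p.2) p.2 ∂π = ∫ z, c2 (R z) z ∂(μ.map T) := by
    rw [← hπ.2, integral_map measurable_snd.aemeasurable hcm.aestronglyMeasurable]
  have hN' : Integrable (fun p : Ed d × Ed d => lam * ‖p.1 - p.2‖) π := hN.const_mul lam
  have hsum : Integrable (fun p : Ed d × Ed d => c2 (R p.2) p.2 + lam * ‖p.1 - p.2‖) π :=
    hQ3.add hN'
  have hpt : ∀ p : Ed d × Ed d,
      huber lam p.1 (R p.2) ≤ c2 (R p.2) p.2 + lam * ‖p.1 - p.2‖ := fun p => by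
    rw [huber_symm, norm_sub_rev p.1]
    exact huber_le_infConv hlam (R p.2) p.1 p.2
  have hmono := integral_mono hI' hsum hpt
  rw [integral_add hQ3 hN', integral_const_mul, hQ4, hQ2] at hmono
  linarith

/-- characterization of optimal transport maps for the Huber cost. With
`Ω ⊂ ℝ^d` compact convex with non-negligible interior, `μ, ν ∈ 𝒫(Ω)` both absolutely
continuous, `λ > 0`, `φ_λ` a `c_{2,λ}`-concave solution of the dual problem over `C(Ω)`,
`ρ_λ` the unique WROF solution, `T_λ` a Borel map μ-a.e. equal to `I - ∇φ_λ^{c₂}`, and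
`R_λ` a Borel map a.e. equal to `I - ∇φ_λ`: then `R_λ ∘ T_λ = id` μ-a.e. (so `R_λ = T_λ⁻¹`),
and a map `S₀` is an optimal transport map from `ν` to `μ` for the Huber cost `c_{2,λ}` iff
`S₀ = T_λ⁻¹ ∘ S_λ` for some optimal transport map `S_λ` for `W₁(ν, ρ_λ)`. -/
theorem stmt15 (d : ℕ) (Ω : Set (Ed d)) (hΩc : IsCompact Ω) (hΩconv : Convex ℝ Ω)
    (hΩint : volume (interior Ω) ≠ 0)
    (μ ν : Measure (Ed d)) (hμ : ProbOn Ω μ) (hν : ProbOn Ω ν)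
    (hμac : μ ≪ (volume : Measure (Ed d))) (hνac : ν ≪ (volume : Measure (Ed d)))
    (lam : ℝ) (hlam : 0 < lam)
    (φlam : Ed d → ℝ) (hφcont : ContinuousOn φlam Ω)
    (hφconc : CConcaveOn (huber lam) Ω φlam)
    (hφmax : ∀ ψ : Ed d → ℝ, ContinuousOn ψ Ω →
      (∫ x, ctrans (huber lam) Ω ψ x ∂μ) + ∫ x, ψ x ∂ν
        ≤ (∫ x, ctrans (huber lam) Ω φlam x ∂μ) + ∫ x, φlam x ∂ν)
    (ρlam : Measure (Ed d)) (hρP : ProbOn Ω ρlam)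
    (hρmin : ∀ ρ, ProbOn Ω ρ → wrof lam μ ν ρlam ≤ wrof lam μ ν ρ)
    (Tlam Rlam : Ed d → Ed d) (hTm : Measurable Tlam) (hRm : Measurable Rlam)
    (hT : ∀ᵐ x ∂μ, Tlam x = x - gradient (ctrans c2 Ω φlam) x)
    (hR : ∀ᵐ x ∂(volume : Measure (Ed d)), Rlam x = x - gradient φlam x) :
    (∀ᵐ x ∂μ, Rlam (Tlam x) = x) ∧
    (∀ S₀ : Ed d → Ed d,
      IsOptimalMap (huber lam) ν μ S₀ ↔
        ∃ Slam : Ed d → Ed d,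
          IsOptimalMap (fun x y => ‖x - y‖) ν ρlam Slam ∧ S₀ =ᵐ[ν] Rlam ∘ Slam) := by
  have := hμ.1
  have := hν.1
  have hφ := lip_of_cconcave hlam hφconc
  have hArg := ae_isArg hΩc hΩconv hμ hμac hφcont hT
  have hArg' : ∀ᵐ x ∂μ, IsArg Ω φlam x (Tlam x) := hArg.mono fun x hx => hx.2
  have hρ : ProbOn Ω (μ.map Tlam) := hμ.map hΩc hTm (hArg'.mono fun x hx => hx.1)
  have hdual := dualSol_of_huber hΩc hΩconv hμ hlam hφ hφmax
  obtain ⟨γ, hγ, hopt⟩ := exists_W1_plan hΩc hρ hν hlam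
    (fun ψ hψ => kr_potential hΩc hμ hν hlam hdual hTm hArg' hψ)
  have hρeq := wrof_min_eq hΩc hμ hν hlam hφ hTm hArg' hγ hopt hρP hρmin
  subst hρeq
  have hρac := map_absolutelyContinuous hΩc hΩconv hν hμac hνac hlam hφ hTm hArg hρ hγ hopt
  have hRT := ae_left_inverse hΩc hΩconv hφ hTm hArg' hρ hρac hR
  refine ⟨hRT, ?_⟩
  have hRρ : (μ.map Tlam).map Rlam = μ := by
    rw [Measure.map_map hRm hTm, Measure.map_congr (show Rlam ∘ Tlam =ᵐ[μ] id from hRT), Measure.map_id]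
  have hc := ctrans_c2_continuousOn hΩc hφcont
  have hub := fun (π : Measure (Ed d × Ed d)) (hπ : IsCoupling ν (μ.map Tlam) π) =>
    huber_plan_of_W1_plan hΩc hΩconv hμ hν hlam hφ hTm hRm hArg' hRT hRρ hπ
  -- reversing the optimal plan gives a plan from `ν` to `ρ`
  have hswap : IsCoupling ν (μ.map Tlam) (γ.map Prod.swap) := by
    constructor
    · rw [Measure.map_map measurable_fst measurable_swap]; exact hγ.2
    · rw [Measure.map_map measurable_snd measurable_swap]; exact hγ.1
  have hswapc : lam * ∫ p, ‖p.1 - p.2‖ ∂(γ.map Prod.swap) ≤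
      ∫ x, φlam x ∂ν - ∫ x, φlam x ∂(μ.map Tlam) := by
    rw [integral_map measurable_swap.aemeasurable
      (by fun_prop : Continuous fun p : Ed d × Ed d => ‖p.1 - p.2‖).aestronglyMeasurable]
    simp only [Prod.fst_swap, Prod.snd_swap]
    simpa only [norm_sub_rev] using hopt
  have hnc : Continuous fun p : Ed d × Ed d => ‖p.1 - p.2‖ := by fun_prop
  intro S₀
  constructor
  · rintro ⟨hSm, hS, hSopt⟩
    have hSm' : AEMeasurable (Tlam ∘ S₀) ν := hTm.comp_aemeasurable hSm
    have hTS : ν.map (Tlam ∘ S₀) = μ.map Tlam := by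
      rw [← hS, AEMeasurable.map_map_of_aemeasurable hTm.aemeasurable hSm]
    have hg := graph_coupling hSm
    rw [hS] at hg
    obtain ⟨hcpl, hcost⟩ := hub _ hswap hswapc
    have hle := (hSopt _ hcpl).trans hcost
    have hcS := integral_push hΩc hSm (hS.symm ▸ hμ) hc
    rw [hS] at hcS
    have hφν := hν.integrable hΩc hφcont
    have hhI : Integrable (fun y => huber lam y (S₀ y)) ν :=
      (weak_duality hΩc hν hμ hg (huber_continuous (lam := lam)) hφcont hc
        (huber_dual_le hΩc hΩconv hlam hφ)).2.2.1.comp_aemeasurable (aemeasurable_id.prodMk hSm)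
    have hS₀Ω : ∀ᵐ y ∂ν, S₀ y ∈ Ω := ae_of_ae_map hSm (by rw [hS]; exact hμ.ae_mem)
    have hS₀A : ∀ᵐ y ∂ν, IsArg Ω φlam (S₀ y) (Tlam (S₀ y)) :=
      ae_of_ae_map hSm (by rw [hS]; exact hArg')
    have hsum : Integrable (fun y => φlam y + ctrans c2 Ω φlam (S₀ y)) ν := hφν.add hcS.1
    have hnn : 0 ≤ᵐ[ν] fun y => huber lam y (S₀ y) - (φlam y + ctrans c2 Ω φlam (S₀ y)) := by
      filter_upwards [hν.ae_mem, hS₀Ω] with y hy hSy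
      exact sub_nonneg.2 (huber_dual_le hΩc hΩconv hlam hφ y hy _ hSy)
    have hz : ∫ y, (huber lam y (S₀ y) - (φlam y + ctrans c2 Ω φlam (S₀ y))) ∂ν = 0 := by
      refine le_antisymm ?_ (integral_nonneg_of_ae hnn)
      rw [integral_sub hhI hsum, integral_add hφν hcS.1, ← hcS.2]
      linarith
    have hslope : ∀ᵐ y ∂ν, lam * ‖y - Tlam (S₀ y)‖ = φlam y - φlam (Tlam (S₀ y)) := by
      filter_upwards [hν.ae_mem, hS₀Ω, hS₀A,
        (integral_eq_zero_iff_of_nonneg_ae hnn (hhI.sub hsum)).1 hz] with y hy hSy hA h0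
      exact slope_of_huber_eq hΩc hΩconv hlam hφ hSy hy hA (sub_eq_zero.1 h0)
    refine ⟨Tlam ∘ S₀, ⟨hSm', hTS, fun π hπ => ?_⟩, ?_⟩
    · have h1 : lam * ∫ y, ‖y - (Tlam ∘ S₀) y‖ ∂ν =
          ∫ x, φlam x ∂ν - ∫ x, φlam x ∂(μ.map Tlam) := by
        have hp := integral_push hΩc hSm' (hTS.symm ▸ hρ) hφcont
        rw [hTS] at hp
        rw [hp.2, ← integral_sub hφν hp.1, ← integral_const_mul]
        exact integral_congr_ae hslope
      have h2 := (weak_duality hΩc hν hρ hπ (c := fun x y => lam * ‖x - y‖) (f := φlam)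
        (g := fun x => -φlam x) (by fun_prop) hφcont hφcont.neg (fun x hx y hy => by
          linarith [lip_le hlam hφ hx hy])).2.2.2.2.2.2.2
      rw [integral_neg, integral_const_mul, ← sub_eq_add_neg, ← h1] at h2
      exact le_of_mul_le_mul_left h2 hlam
    · have : ∀ᵐ y ∂ν, Rlam (Tlam (S₀ y)) = S₀ y := ae_of_ae_map hSm (by rw [hS]; exact hRT)
      filter_upwards [this] with y hy
      exact hy.symm
  · rintro ⟨S, ⟨hSm, hS, hSopt⟩, hS₀⟩
    have hSm' : AEMeasurable (Rlam ∘ S) ν := hRm.comp_aemeasurable hSm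
    refine ⟨hSm'.congr hS₀.symm, ?_, fun π hπ => ?_⟩
    · rw [Measure.map_congr hS₀, ← AEMeasurable.map_map_of_aemeasurable hRm.aemeasurable hSm, hS,
        hRρ]
    · have hg := graph_coupling hSm
      rw [hS] at hg
      have h1 : lam * ∫ p, ‖p.1 - p.2‖ ∂(ν.map fun y => (y, S y)) ≤
          ∫ x, φlam x ∂ν - ∫ x, φlam x ∂(μ.map Tlam) := by
        rw [integral_graph (c := fun x y => ‖x - y‖) hSm hnc]
        exact (mul_le_mul_of_nonneg_left (hSopt _ hswap) hlam.le).trans hswapc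
      have h2 := (hub _ hg h1).2
      have hm : AEMeasurable (fun y => (y, S y)) ν := aemeasurable_id.prodMk hSm
      have hm' : Measurable fun p : Ed d × Ed d => (p.1, Rlam p.2) := by fun_prop
      rw [AEMeasurable.map_map_of_aemeasurable hm'.aemeasurable hm] at h2
      have h3 : ∫ y, huber lam y (S₀ y) ∂ν = ∫ y, huber lam y ((Rlam ∘ S) y) ∂ν :=
        integral_congr_ae (by filter_upwards [hS₀] with y hy; rw [hy])
      rw [h3, ← integral_graph hSm' huber_continuous]
      exact h2.trans (weak_duality hΩc hν hμ hπ (huber_continuous (lam := lam)) hφcont hc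
        (huber_dual_le hΩc hΩconv hlam hφ)).2.2.2.2.2.2.2
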